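/- arXiv:1111.4047 — 3 statements merged into one kernel-verified Lean document; each statement's English description precedes it below -/
import Mathlib

section
/- (β-extended MacMahon Master Theorem) For an n×n matrix A (e.g., with entries that are formal variables or in a neighborhood where the series converges), Σ_{r} (1/r!) perm_β A(n^r, n^r) = det(I - A)^{-β}, where the sum is over all n-tuples r = (r_1,...,r_n) of non-negative integers, r! = r_1!···r_n!, and A(n^r,n^r) is the N×N matrix (N = Σ r_i) obtained by repeating row/column index i exactly r_i times, with the convention A(n^0,n^0) = 1. -/
open scoped Classical

noncomputable section

/-- Number of cycles of a permutation, counting fixed points as 1-cycles. -/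
def cycleCount {α : Type*} [Fintype α] [DecidableEq α] (π : Equiv.Perm α) : ℕ :=
  (Finset.univ.filter fun x => π x = x).card + π.cycleType.card

/-- The β-extended permanent of a matrix. -/
def permB {α : Type*} [Fintype α] [DecidableEq α] {R : Type*} [CommRing R]
    (β : R) (M : Matrix α α R) : R :=
  ∑ π : Equiv.Perm α, β ^ cycleCount π * ∏ i, M i (π i)

/-- The matrix `A(n^r, n^r)` indexed by the multiset in which index `i` is
repeated `r i` times: entries depend only on the underlying labels. -/
def repA {n : ℕ} {R : Type*} (A : Matrix (Fin n) (Fin n) R) (r : Fin n → ℕ) :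
    Matrix ((i : Fin n) × Fin (r i)) ((i : Fin n) × Fin (r i)) R :=
  fun k l => A k.1 l.1


open Equiv Equiv.Perm Finset

lemma cycleCount_eq_card {α : Type*} [Fintype α] [DecidableEq α] (π : Equiv.Perm α) :
    cycleCount π = Nat.card (Quotient (SameCycle.setoid π)) := by
  rw [Nat.card_eq_fintype_card, ← Finset.card_univ]
  have h : (Finset.univ : Finset (Quotient (SameCycle.setoid π))) =
      (Finset.univ.filter fun x => π x = x).image (fun x => Quotient.mk (SameCycle.setoid π) x) ∪
      π.support.image (fun x => Quotient.mk (SameCycle.setoid π) x) := by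
    ext q
    induction q using Quotient.inductionOn with
    | h x =>
      simp only [mem_univ, true_iff, mem_union, mem_image, mem_filter, true_and, mem_support]
      by_cases hx : π x = x
      · exact Or.inl ⟨x, hx, rfl⟩
      · exact Or.inr ⟨x, hx, rfl⟩
  have hmk : ∀ x y : α, (Quotient.mk (SameCycle.setoid π) x = Quotient.mk (SameCycle.setoid π) y)
      ↔ π.SameCycle x y := fun x y => Quotient.eq
  rw [h, card_union_of_disjoint, card_image_of_injOn]
  · unfold cycleCount
    congr 1
    have h1 : π.cycleFactorsFinset = π.support.image (fun x => π.cycleOf x) := by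
      ext c
      simp only [mem_image]
      constructor
      · intro hc
        obtain ⟨x, hx⟩ := (mem_cycleFactorsFinset_iff.1 hc).1.nonempty_support
        refine ⟨x, mem_cycleFactorsFinset_support_le hc hx, ?_⟩
        exact (cycle_is_cycleOf hx hc).symm
      · rintro ⟨x, hx, rfl⟩
        exact cycleOf_mem_cycleFactorsFinset_iff.2 hx
    have h2 : π.cycleType.card = π.cycleFactorsFinset.card := by
      simp [cycleType_def]
    rw [h2, h1]
    have key : ∀ s : Finset α, s ⊆ π.support → (s.image (fun x => π.cycleOf x)).card =
        (s.image (fun x => Quotient.mk (SameCycle.setoid π) x)).card := by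
      intro s hs
      induction s using Finset.induction_on with
      | empty => simp
      | insert a s ha ih =>
        have ih' := ih (fun x hx => hs (mem_insert_of_mem hx))
        rw [image_insert, image_insert]
        have : (π.cycleOf a ∈ s.image (fun x => π.cycleOf x)) ↔
          (Quotient.mk (SameCycle.setoid π) a ∈ s.image (fun x => Quotient.mk (SameCycle.setoid π) x)) := by
          simp only [mem_image]
          refine exists_congr fun y => and_congr_right fun hy => ?_
          rw [hmk]
          exact (sameCycle_iff_cycleOf_eq_of_mem_support (hs (mem_insert_of_mem hy))
            (hs (mem_insert_self _ _))).symm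
        rw [card_insert_eq_ite, card_insert_eq_ite, ih']
        simp only [this]
    exact key _ subset_rfl
  · intro x hx y hy hxy
    have := (hmk x y).1 hxy
    simp only [coe_filter, mem_univ, true_and, Set.mem_ofPred_eq] at hx
    obtain ⟨k, hk⟩ := this
    rw [zpow_apply_eq_self_of_apply_eq_self hx] at hk
    exact hk
  · rw [Finset.disjoint_left]
    intro q hq hq'
    simp only [mem_image, mem_filter, mem_univ, true_and, mem_support] at hq hq'
    obtain ⟨x, hx, rfl⟩ := hq
    obtain ⟨y, hy, hxy⟩ := hq'
    obtain ⟨k, hk⟩ := ((hmk y x).1 hxy).symm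
    rw [zpow_apply_eq_self_of_apply_eq_self hx] at hk
    exact hy (hk ▸ hx)

lemma sameCycle_map {α γ : Type*} (π : Perm α) (σ : Perm γ) (g : α → γ)
    (hg : ∀ x, σ.SameCycle (g x) (g (π x))) {x y : α} (h : π.SameCycle x y) :
    σ.SameCycle (g x) (g y) := by
  obtain ⟨k, rfl⟩ := h
  induction k using Int.induction_on with
  | zero => exact SameCycle.refl _ _
  | succ k ih =>
    have := hg ((π ^ (k:ℤ)) x)
    rw [← Perm.mul_apply, ← zpow_one_add, add_comm] at this
    exact ih.trans this
  | pred k ih =>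
    have := hg ((π ^ (-(k:ℤ) - 1)) x)
    rw [← Perm.mul_apply, ← zpow_one_add] at this
    rw [show 1 + (-(k:ℤ) - 1) = -k by ring] at this
    exact ih.trans this.symm

lemma cycleCount_congr {α γ : Type*} [Fintype α] [DecidableEq α] [Fintype γ] [DecidableEq γ]
    (π : Perm α) (σ : Perm γ) (g : α → γ) (h : γ → α)
    (hg : ∀ x, σ.SameCycle (g x) (g (π x))) (hh : ∀ x, π.SameCycle (h x) (h (σ x)))
    (hgh : ∀ x, σ.SameCycle (g (h x)) x) (hhg : ∀ x, π.SameCycle (h (g x)) x) :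
    cycleCount π = cycleCount σ := by
  rw [cycleCount_eq_card, cycleCount_eq_card]
  refine Nat.card_congr
    { toFun := Quotient.map' (s₁ := SameCycle.setoid π) (s₂ := SameCycle.setoid σ) g
        (fun a b hab => sameCycle_map π σ g hg hab)
      invFun := Quotient.map' (s₁ := SameCycle.setoid σ) (s₂ := SameCycle.setoid π) h
        (fun a b hab => sameCycle_map σ π h hh hab)
      left_inv := ?_
      right_inv := ?_ }
  · intro q
    induction q using Quotient.inductionOn' with
    | h x => exact Quotient.sound' (hhg x)
  · intro q
    induction q using Quotient.inductionOn' with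
    | h x => exact Quotient.sound' (hgh x)

lemma cycleCount_permCongr {α γ : Type*} [Fintype α] [DecidableEq α] [Fintype γ] [DecidableEq γ]
    (e : α ≃ γ) (π : Perm α) : cycleCount (e.permCongr π) = cycleCount π := by
  refine (cycleCount_congr π (e.permCongr π) e e.symm ?_ ?_ ?_ ?_).symm
  · intro x; exact ⟨1, by simp⟩
  · intro x; exact ⟨1, by simp⟩
  · intro x; exact ⟨0, by simp⟩
  · intro x; exact ⟨0, by simp⟩

lemma insert_apply_some {α : Type*} [DecidableEq α] (σ : Perm α) (k i : α) :
    (swap none (some (σ k)) * σ.optionCongr) (some i) =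
      if i = k then none else some (σ i) := by
  simp only [Perm.mul_apply, optionCongr_apply, Option.map_some]
  split_ifs with h
  · subst h; simp
  · rw [swap_apply_of_ne_of_ne] <;> simp [h]

lemma insert_apply_none {α : Type*} [DecidableEq α] (σ : Perm α) (k : α) :
    (swap none (some (σ k)) * σ.optionCongr) none = some (σ k) := by
  simp

lemma cycleCount_insert {α : Type*} [Fintype α] [DecidableEq α] (σ : Perm α) (k : α) :
    cycleCount (swap none (some (σ k)) * σ.optionCongr) = cycleCount σ := by
  refine cycleCount_congr _ σ (fun o => o.getD k) some ?_ ?_ ?_ ?_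
  · rintro (_ | x)
    · rw [insert_apply_none]; exact ⟨1, by simp⟩
    · rw [insert_apply_some]
      split_ifs with h
      · subst h; exact SameCycle.refl _ _
      · exact ⟨1, by simp⟩
  · intro x
    by_cases h : x = k
    · subst h
      refine ⟨2, ?_⟩
      rw [show (2:ℤ) = 1 + 1 by norm_num, zpow_add, zpow_one, Perm.mul_apply, insert_apply_some,
        if_pos rfl, insert_apply_none]
    · refine ⟨1, ?_⟩
      rw [zpow_one, insert_apply_some, if_neg h]
  · intro x; exact SameCycle.refl _ _
  · rintro (_ | x)
    · refine SameCycle.symm ⟨-1, ?_⟩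
      rw [zpow_neg_one, Perm.inv_eq_iff_eq]
      simp only [Option.getD_none]
      rw [insert_apply_some, if_pos rfl]
    · exact SameCycle.refl _ _

lemma cycleCount_optionCongr {α : Type*} [Fintype α] [DecidableEq α] (σ : Perm α) :
    cycleCount σ.optionCongr = cycleCount σ + 1 := by
  rw [cycleCount_eq_card, cycleCount_eq_card, ← Finite.card_option]
  have hmk : ∀ {γ : Type _} (σ : Perm γ) (x y : γ), (Quotient.mk (SameCycle.setoid σ) x = Quotient.mk (SameCycle.setoid σ) y)
      ↔ σ.SameCycle x y := fun σ x y => Quotient.eq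
  have hs : ∀ x y, σ.SameCycle x y → SameCycle (σ.optionCongr : Perm (Option α)) (some x) (some y) := fun x y h =>
    sameCycle_map σ (σ.optionCongr : Perm (Option α)) some (fun x => ⟨1, by simp⟩) h
  let F : Option α → Option (Quotient (SameCycle.setoid σ)) :=
    fun o => o.map (fun x => Quotient.mk (SameCycle.setoid σ) x)
  have hF1 : ∀ x, F (σ.optionCongr x) = F x := by
    rintro (_ | x)
    · rfl
    · simp only [F, optionCongr_apply, Option.map_some, Option.some.injEq]
      rw [hmk]; exact SameCycle.symm ⟨1, by simp⟩
  have hF : ∀ x y, SameCycle (σ.optionCongr : Perm (Option α)) x y → F x = F y := by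
    rintro x y ⟨k, rfl⟩
    induction k using Int.induction_on with
    | zero => rfl
    | succ k ih => rw [ih, add_comm, zpow_one_add, Perm.mul_apply, hF1]
    | pred k ih =>
      rw [ih, ← hF1 (((σ.optionCongr : Perm (Option α)) ^ (-(k:ℤ) - 1)) x), ← Perm.mul_apply, ← zpow_one_add]
      congr 3; ring
  refine Nat.card_congr
    { toFun := Quotient.lift (s := SameCycle.setoid σ.optionCongr) F hF
      invFun := fun o => o.elim (Quotient.mk (SameCycle.setoid σ.optionCongr) none)
        (Quotient.lift (s := SameCycle.setoid σ)
          (fun x => Quotient.mk (SameCycle.setoid σ.optionCongr) (some x))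
          (fun x y h => (hmk _ _ _).2 (hs x y h)))
      left_inv := ?_
      right_inv := ?_ }
  · intro q
    induction q using Quotient.inductionOn with
    | h x => cases x <;> rfl
  · rintro (_ | q)
    · rfl
    · induction q using Quotient.inductionOn with
      | h x => rfl

lemma permB_reindex {α γ : Type*} [Fintype α] [DecidableEq α] [Fintype γ] [DecidableEq γ]
    (e : α ≃ γ) (β : ℝ) (M : Matrix γ γ ℝ) : permB β (M.submatrix e e) = permB β M := by
  unfold permB
  refine Fintype.sum_equiv e.permCongr _ _ fun π => ?_
  rw [cycleCount_permCongr]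
  congr 1
  exact Fintype.prod_equiv e _ _ fun i => by simp

/-- sum over all labelings of the β-permanent -/
def sumB (n : ℕ) (β : ℝ) (A : Matrix (Fin n) (Fin n) ℝ) (α : Type*) [Fintype α] [DecidableEq α] : ℝ :=
  ∑ f : α → Fin n, permB β (A.submatrix f f)

/-- marked version: row `a` uses the matrix `B` -/
def markB {n : ℕ} (β : ℝ) (A B : Matrix (Fin n) (Fin n) ℝ) {α : Type*} [Fintype α] [DecidableEq α]
    (a : α) : ℝ :=
  ∑ f : α → Fin n, ∑ π : Perm α, β ^ cycleCount π * ∏ i, if i = a then B (f i) (f (π i)) else A (f i) (f (π i))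

lemma markB_self {n : ℕ} (β : ℝ) (A : Matrix (Fin n) (Fin n) ℝ) {α : Type*} [Fintype α] [DecidableEq α]
    (a : α) : markB β A A a = sumB n β A α := by
  simp [markB, sumB, permB]

lemma sumB_reindex {n : ℕ} {α γ : Type*} [Fintype α] [DecidableEq α] [Fintype γ] [DecidableEq γ]
    (e : α ≃ γ) (β : ℝ) (A : Matrix (Fin n) (Fin n) ℝ) :
    sumB n β A α = sumB n β A γ := by
  refine Fintype.sum_equiv (e.arrowCongr (Equiv.refl _)) _ _ fun f => ?_
  rw [← permB_reindex e]
  congr 1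
  ext i j
  simp

lemma markB_reindex {n : ℕ} {α γ : Type*} [Fintype α] [DecidableEq α] [Fintype γ] [DecidableEq γ]
    (e : α ≃ γ) (β : ℝ) (A B : Matrix (Fin n) (Fin n) ℝ) (a : α) :
    markB β A B a = markB β A B (e a) := by
  refine Fintype.sum_equiv (e.arrowCongr (Equiv.refl _)) _ _ fun f => ?_
  refine Fintype.sum_equiv e.permCongr _ _ fun π => ?_
  rw [cycleCount_permCongr]
  congr 1
  exact Fintype.prod_equiv e _ _ fun i => by simp

lemma markB_option {n : ℕ} {α : Type*} [Fintype α] [DecidableEq α]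
    (β : ℝ) (A B : Matrix (Fin n) (Fin n) ℝ) :
    markB β A B (none : Option α) =
      β * B.trace * sumB n β A α + ∑ k : α, markB β A (A * B) k := by
  unfold markB sumB permB
  rw [← (Equiv.piOptionEquivProd (β := fun _ : Option α => Fin n)).symm.sum_comp, Fintype.sum_prod_type,
    Finset.sum_comm, Finset.sum_comm (s := (univ : Finset α)), Finset.mul_sum, ← Finset.sum_add_distrib]
  refine Finset.sum_congr rfl fun f _ => ?_
  simp_rw [← (Equiv.Perm.decomposeOption (α := α)).symm.sum_comp, Fintype.sum_prod_type]
  simp_rw [Finset.sum_comm (t := (univ : Finset (Perm α)))]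
  rw [Finset.mul_sum, ← Finset.sum_add_distrib]
  refine Finset.sum_congr rfl fun σ _ => ?_
  simp_rw [Fintype.sum_option]
  rw [Finset.sum_add_distrib]
  have hF : ∀ (x : Fin n) (i : α), (Equiv.piOptionEquivProd (β := fun _ : Option α => Fin n)).symm
      (x, f) (some i) = f i := fun _ _ => rfl
  have hN : ∀ (x : Fin n), (Equiv.piOptionEquivProd (β := fun _ : Option α => Fin n)).symm
      (x, f) none = x := fun _ => rfl
  congr 1
  · have h0 : decomposeOption.symm (none, σ) = σ.optionCongr := by
      ext1 i; exact decomposeOption_symm_of_none_apply σ i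
    rw [h0, cycleCount_optionCongr]
    simp_rw [Fintype.prod_option, optionCongr_apply, Option.map_some, Option.map_none, hF, hN]
    simp only [if_true, reduceCtorEq, if_false, Matrix.trace, Finset.mul_sum, Finset.sum_mul,
      Matrix.diag_apply, Matrix.submatrix_apply]
    refine Finset.sum_congr rfl fun x _ => by ring
  · rw [Finset.sum_comm, ← Equiv.sum_comp σ]
    refine Finset.sum_congr rfl fun k _ => ?_
    have h0 : decomposeOption.symm (some (σ k), σ) = swap none (some (σ k)) * σ.optionCongr := by simp
    simp_rw [h0, cycleCount_insert, ← Finset.mul_sum]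
    congr 1
    rw [← Finset.mul_prod_erase _ _ (mem_univ k)]
    simp only [if_true, Matrix.mul_apply, Finset.sum_mul]
    refine Finset.sum_congr rfl fun x _ => ?_
    rw [Fintype.prod_option, insert_apply_none, ← Finset.mul_prod_erase _ _ (mem_univ k)]
    simp_rw [insert_apply_some]
    simp only [if_true, reduceCtorEq, if_false, hF, hN]
    rw [← mul_assoc, mul_comm (B _ _)]
    congr 1
    refine Finset.prod_congr rfl fun i hi => ?_
    rw [if_neg (Finset.ne_of_mem_erase hi), if_neg (Finset.ne_of_mem_erase hi), hF]

lemma cycleCount_le {α : Type*} [Fintype α] [DecidableEq α] (π : Perm α) :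
    cycleCount π ≤ Fintype.card α := by
  rw [cycleCount_eq_card, ← Nat.card_eq_fintype_card]
  exact Nat.card_le_card_of_surjective (Quotient.mk (SameCycle.setoid π)) Quotient.mk_surjective

lemma abs_pow_cycleCount_le {α : Type*} [Fintype α] [DecidableEq α] (π : Perm α) {β K : ℝ}
    (hK : 1 ≤ K) (hβ : |β| ≤ K) : |β ^ cycleCount π| ≤ K ^ Fintype.card α := by
  rw [abs_pow]
  exact (pow_le_pow_left₀ (abs_nonneg _) hβ _).trans (pow_le_pow_right₀ hK (cycleCount_le π))

lemma abs_permB_le {α : Type*} [Fintype α] [DecidableEq α] {β K e : ℝ}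
    (hK : 1 ≤ K) (hβ : |β| ≤ K) (M : Matrix α α ℝ) (hM : ∀ i j, |M i j| ≤ e) :
    |permB β M| ≤ (Fintype.card α).factorial * (K * e) ^ Fintype.card α := by
  unfold permB
  refine (Finset.abs_sum_le_sum_abs _ _).trans ?_
  refine (Finset.sum_le_card_nsmul _ _ ((K * e) ^ Fintype.card α) ?_).trans ?_
  · intro π _
    rw [abs_mul, Finset.abs_prod, mul_pow]
    refine mul_le_mul (abs_pow_cycleCount_le π hK hβ) ?_ (by positivity) (by positivity)
    refine (Finset.prod_le_prod (fun _ _ => abs_nonneg _) (fun i _ => hM i (π i))).trans ?_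
    simp
  · rw [Finset.card_univ, Fintype.card_perm, nsmul_eq_mul]

lemma abs_markB_le {n : ℕ} {α : Type*} [Fintype α] [DecidableEq α] {β K e b : ℝ}
    (hK : 1 ≤ K) (hβ : |β| ≤ K) (A B : Matrix (Fin n) (Fin n) ℝ) (he : 0 ≤ e)
    (hA : ∀ i j, |A i j| ≤ e) (hb : 0 ≤ b) (hB : ∀ i j, |B i j| ≤ b) :
    |markB β A B (none : Option α)| ≤ (n : ℝ) ^ (Fintype.card α + 1) *
      ((Fintype.card α + 1).factorial * (K ^ (Fintype.card α + 1) * (b * e ^ Fintype.card α))) := by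
  unfold markB
  refine (Finset.abs_sum_le_sum_abs _ _).trans ?_
  refine (Finset.sum_le_card_nsmul _ _ ((Fintype.card α + 1).factorial *
    (K ^ (Fintype.card α + 1) * (b * e ^ Fintype.card α))) ?_).trans ?_
  · intro f _
    refine (Finset.abs_sum_le_sum_abs _ _).trans ?_
    refine (Finset.sum_le_card_nsmul _ _ (K ^ (Fintype.card α + 1) * (b * e ^ Fintype.card α)) ?_).trans ?_
    · intro π _
      rw [abs_mul]
      have := abs_pow_cycleCount_le π hK hβ
      rw [Fintype.card_option] at this
      refine mul_le_mul this ?_ (by positivity) (by positivity)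
      rw [Fintype.prod_option, abs_mul, Finset.abs_prod]
      simp only [if_true, reduceCtorEq, if_false]
      refine mul_le_mul (hB _ _) ?_ (by positivity) hb
      refine (Finset.prod_le_prod (fun _ _ => abs_nonneg _) (fun i _ => hA _ _)).trans ?_
      simp
    · rw [Finset.card_univ, Fintype.card_perm, nsmul_eq_mul, Fintype.card_option]
  · rw [Finset.card_univ, Fintype.card_fun, nsmul_eq_mul, Fintype.card_option]
    simp

lemma markB_sub_smul {n : ℕ} {α : Type*} [Fintype α] [DecidableEq α] (β t : ℝ)
    (A B C : Matrix (Fin n) (Fin n) ℝ) :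
    markB β A (B - t • C) (none : Option α) =
      markB β A B (none : Option α) - t * markB β A C (none : Option α) := by
  unfold markB
  rw [Finset.mul_sum, ← Finset.sum_sub_distrib]
  refine Finset.sum_congr rfl fun f _ => ?_
  rw [Finset.mul_sum, ← Finset.sum_sub_distrib]
  refine Finset.sum_congr rfl fun π _ => ?_
  simp only [Fintype.prod_option, if_true, reduceCtorEq, if_false, Matrix.sub_apply,
    Matrix.smul_apply, smul_eq_mul]
  ring

/-- degree `N` coefficient -/
def gB {n : ℕ} (β : ℝ) (A : Matrix (Fin n) (Fin n) ℝ) (N : ℕ) : ℝ :=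
  sumB n β A (Fin N) / N.factorial

/-- degree `N` marked coefficient -/
def wB {n : ℕ} (β : ℝ) (A B : Matrix (Fin n) (Fin n) ℝ) (N : ℕ) : ℝ :=
  markB β A B (none : Option (Fin N)) / N.factorial

lemma wB_sub_smul {n : ℕ} (β t : ℝ) (A B C : Matrix (Fin n) (Fin n) ℝ) (N : ℕ) :
    wB β A (B - t • C) N = wB β A B N - t * wB β A C N := by
  unfold wB; rw [markB_sub_smul]; ring

lemma wB_zero {n : ℕ} (β : ℝ) (A B : Matrix (Fin n) (Fin n) ℝ) :
    wB β A B 0 = β * B.trace * gB β A 0 := by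
  unfold wB gB; rw [markB_option]; simp

lemma wB_succ {n : ℕ} (β : ℝ) (A B : Matrix (Fin n) (Fin n) ℝ) (N : ℕ) :
    wB β A B (N + 1) = β * B.trace * gB β A (N + 1) + wB β A (A * B) N := by
  unfold wB gB
  rw [markB_option]
  have : ∀ k : Fin (N + 1), markB β A (A * B) k = markB β A (A * B) (none : Option (Fin N)) := by
    intro k
    rw [markB_reindex (finSuccEquiv' k), finSuccEquiv'_at]
  simp only [this, Finset.sum_const, Finset.card_univ, Fintype.card_fin, nsmul_eq_mul]
  have h1 : ((N + 1).factorial : ℝ) = (N + 1) * N.factorial := by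
    rw [Nat.factorial_succ]; push_cast; ring
  have h2 : (N.factorial : ℝ) ≠ 0 := by positivity
  have h3 : (N + 1 : ℝ) ≠ 0 := by positivity
  rw [h1]
  push_cast
  field_simp

lemma wB_self {n : ℕ} (β : ℝ) (A : Matrix (Fin n) (Fin n) ℝ) (N : ℕ) :
    wB β A A N = (N + 1) * gB β A (N + 1) := by
  unfold wB gB
  rw [markB_self, ← sumB_reindex (finSuccEquiv' (0 : Fin (N + 1)))]
  have h1 : ((N + 1).factorial : ℝ) = (N + 1) * N.factorial := by
    rw [Nat.factorial_succ]; push_cast; ring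
  have h2 : (N.factorial : ℝ) ≠ 0 := by positivity
  have h3 : (N + 1 : ℝ) ≠ 0 := by positivity
  rw [h1]
  field_simp

lemma gB_zero {n : ℕ} (β : ℝ) (A : Matrix (Fin n) (Fin n) ℝ) : gB β A 0 = 1 := by
  have : ∀ π : Perm (Fin 0), cycleCount π = 0 := fun π => by
    have := cycleCount_le π
    simpa using this
  simp [gB, sumB, permB, this]

lemma abs_gB_le {n : ℕ} {β K e : ℝ} (hK : 1 ≤ K) (hβ : |β| ≤ K) (A : Matrix (Fin n) (Fin n) ℝ)
    (hA : ∀ i j, |A i j| ≤ e) (N : ℕ) : |gB β A N| ≤ (n * (K * e)) ^ N := by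
  unfold gB sumB
  rw [abs_div, Nat.abs_cast, div_le_iff₀ (by positivity)]
  refine (Finset.abs_sum_le_sum_abs _ _).trans ?_
  refine (Finset.sum_le_card_nsmul _ _ (N.factorial * (K * e) ^ N) ?_).trans ?_
  · intro f _
    have := abs_permB_le hK hβ (A.submatrix f f) (fun i j => hA _ _)
    simpa using this
  · rw [Finset.card_univ, Fintype.card_fun, nsmul_eq_mul]
    simp only [Fintype.card_fin, Nat.cast_pow]
    rw [mul_pow]
    apply le_of_eq; ring

lemma abs_wB_le {n : ℕ} {β K e b : ℝ} (hK : 1 ≤ K) (hβ : |β| ≤ K) (A B : Matrix (Fin n) (Fin n) ℝ)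
    (he : 0 ≤ e) (hA : ∀ i j, |A i j| ≤ e) (hb : 0 ≤ b) (hB : ∀ i j, |B i j| ≤ b) (N : ℕ) :
    |wB β A B N| ≤ n * K * b * ((N + 1) * (n * (K * e)) ^ N) := by
  unfold wB
  rw [abs_div, Nat.abs_cast, div_le_iff₀ (by positivity)]
  refine (abs_markB_le hK hβ A B he hA hb hB).trans (le_of_eq ?_)
  rw [Fintype.card_fin, Nat.factorial_succ]
  push_cast
  ring

lemma wB_summable {n : ℕ} {β K e t : ℝ} (hK : 1 ≤ K) (hβ : |β| ≤ K) (A B : Matrix (Fin n) (Fin n) ℝ)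
    (he : 0 ≤ e) (hA : ∀ i j, |A i j| ≤ e) (hq : n * (K * e) ≤ 1 / 4) (ht : |t| ≤ 2) :
    Summable fun N => wB β A B N * t ^ N := by
  obtain ⟨b, hb, hB⟩ : ∃ b : ℝ, 0 ≤ b ∧ ∀ i j, |B i j| ≤ b := by
    refine ⟨∑ i, ∑ j, |B i j|, by positivity, fun i j => ?_⟩
    refine le_trans ?_ (Finset.single_le_sum (f := fun i => ∑ j, |B i j|) (fun i _ => by positivity) (mem_univ i))
    exact Finset.single_le_sum (f := fun j => |B i j|) (fun i _ => by positivity) (mem_univ j)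
  have hs : Summable fun N : ℕ => n * K * b * (((N : ℝ) + 1) * (1 / 2 : ℝ) ^ N) := by
    refine Summable.mul_left _ ?_
    simp_rw [add_mul, one_mul]
    refine Summable.add ?_ (summable_geometric_of_lt_one (by norm_num) (by norm_num))
    have := summable_pow_mul_geometric_of_norm_lt_one (R := ℝ) 1 (r := 1 / 2) (by norm_num)
    simpa using this
  refine Summable.of_norm_bounded hs fun N => ?_
  rw [Real.norm_eq_abs, abs_mul, abs_pow]
  have h0 : 0 ≤ n * (K * e) := by positivity
  calc |wB β A B N| * |t| ^ N ≤ (n * K * b * ((N + 1) * (n * (K * e)) ^ N)) * 2 ^ N := by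
        refine mul_le_mul (abs_wB_le hK hβ A B he hA hb hB N) (pow_le_pow_left₀ (abs_nonneg _) ht _)
          (by positivity) (by positivity)
    _ ≤ (n * K * b * ((N + 1) * (1 / 4) ^ N)) * 2 ^ N := by gcongr
    _ = _ := by
      rw [show (1 / 4 : ℝ) = 1 / 2 * (1 / 2) by norm_num, mul_pow]
      have : (1 / 2 : ℝ) ^ N * 2 ^ N = 1 := by rw [← mul_pow]; norm_num
      linear_combination (n * K * b * ((N + 1) * (1 / 2) ^ N)) * this

lemma gB_summable {n : ℕ} {β K e t : ℝ} (hK : 1 ≤ K) (hβ : |β| ≤ K) (A : Matrix (Fin n) (Fin n) ℝ)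
    (he : 0 ≤ e) (hA : ∀ i j, |A i j| ≤ e) (hq : n * (K * e) ≤ 1 / 4) (ht : |t| ≤ 2) :
    Summable fun N => gB β A N * t ^ N := by
  refine Summable.of_norm_bounded (summable_geometric_of_lt_one (r := 1 / 2) (by norm_num) (by norm_num))
    fun N => ?_
  rw [Real.norm_eq_abs, abs_mul, abs_pow]
  have h0 : 0 ≤ n * (K * e) := by positivity
  calc |gB β A N| * |t| ^ N ≤ (1 / 4) ^ N * 2 ^ N := by
        refine mul_le_mul ((abs_gB_le hK hβ A hA N).trans (pow_le_pow_left₀ h0 hq _))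
          (pow_le_pow_left₀ (abs_nonneg _) ht _) (by positivity) (by positivity)
    _ = _ := by rw [← mul_pow]; norm_num

/-- the functional equation -/
lemma tsum_wB {n : ℕ} {β K e t : ℝ} (hK : 1 ≤ K) (hβ : |β| ≤ K) (A B : Matrix (Fin n) (Fin n) ℝ)
    (he : 0 ≤ e) (hA : ∀ i j, |A i j| ≤ e) (hq : n * (K * e) ≤ 1 / 4) (ht : |t| ≤ 2) 
    (hB : (1 - t • A) * B = A) :
    ∑' N, wB β A A N * t ^ N = β * B.trace * ∑' N, gB β A N * t ^ N := by
  have s1 := fun C => wB_summable (t := t) hK hβ A C he hA hq ht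
  have s2 := gB_summable (t := t) hK hβ A he hA hq ht
  have h1 : ∀ N, wB β A A N * t ^ N = wB β A B N * t ^ N - t * (wB β A (A * B) N * t ^ N) := by
    intro N
    have : A = B - t • (A * B) := by rw [sub_mul, one_mul, smul_mul_assoc] at hB; exact hB.symm
    conv_lhs => rw [show wB β A A N = wB β A (B - t • (A * B)) N by rw [← this]]
    rw [wB_sub_smul]; ring
  simp_rw [h1]
  rw [Summable.tsum_sub (s1 B) ((s1 (A * B)).mul_left t), (s1 B).tsum_eq_zero_add, s2.tsum_eq_zero_add,
    tsum_mul_left]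
  have h2 : ∀ N, wB β A B (N + 1) * t ^ (N + 1) = β * B.trace * (gB β A (N + 1) * t ^ (N + 1)) +
    t * (wB β A (A * B) N * t ^ N) := by
    intro N; rw [wB_succ]; ring
  simp_rw [h2]
  rw [Summable.tsum_add (((summable_nat_add_iff 1).2 s2).mul_left _) ((s1 (A * B)).mul_left t),
    tsum_mul_left, tsum_mul_left, wB_zero]
  ring

lemma hasDerivAt_G {n : ℕ} {β K e t : ℝ} (hK : 1 ≤ K) (hβ : |β| ≤ K) (A : Matrix (Fin n) (Fin n) ℝ)
    (he : 0 ≤ e) (hA : ∀ i j, |A i j| ≤ e) (hq : n * (K * e) ≤ 1 / 4) (ht : |t| < 2) :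
    HasDerivAt (fun t => ∑' N, gB β A N * t ^ N) (∑' N, wB β A A N * t ^ N) t := by
  have hw := (wB_summable (t := 2) hK hβ A A he hA hq (by norm_num)).norm
  have h := hasDerivAt_tsum_of_isPreconnected (𝕜 := ℝ) (F := ℝ) 
    (g := fun N y => gB β A (N + 1) * y ^ (N + 1)) (g' := fun N y => wB β A A N * y ^ N)
    (t := Metric.ball 0 2) (y₀ := 0) (y := t) hw Metric.isOpen_ball
    (convex_ball (0:ℝ) 2).isPreconnected ?_ ?_ (by simp) ?_ (by simpa using ht)
  · refine (h.const_add (gB β A 0)).congr_of_eventuallyEq ?_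
    have : ∀ᶠ x in nhds t, |x| < 2 := (continuous_abs.tendsto t).eventually_lt_const ht
    filter_upwards [this] with x hx
    rw [(gB_summable (t := x) hK hβ A he hA hq hx.le).tsum_eq_zero_add]
    simp
  · intro N y _
    have := (hasDerivAt_pow (N + 1) y).const_mul (gB β A (N + 1))
    refine this.congr_deriv ?_
    rw [wB_self, Nat.add_sub_cancel]; push_cast; ring
  · intro N y hy
    simp only [norm_mul, norm_pow]
    gcongr
    simpa using (mem_ball_zero_iff.1 hy).le.trans (by norm_num)
  · simp only [ne_eq, Nat.add_eq_zero_iff, one_ne_zero, and_false, not_false_eq_true, zero_pow, mul_zero]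
    exact summable_zero

lemma hasDerivAt_det {n : ℕ} (A B : Matrix (Fin n) (Fin n) ℝ) (t : ℝ)
    (hB : (1 - t • A) * B = A) :
    HasDerivAt (fun s : ℝ => (1 - s • A).det) (-((1 - t • A).det * B.trace)) t := by
  have h : ∀ s : ℝ, (1 - s • A).det = (1 - t • A).det * (1 + (s - t) • (-B)).det := by
    intro s
    rw [← Matrix.det_mul]
    congr 1
    rw [mul_add, mul_one, mul_smul_comm, mul_neg, hB, sub_smul]
    simp only [smul_neg, sub_neg_eq_add]; abel
  have h2 : (fun s : ℝ => (1 - s • A).det) = fun s => (1 - t • A).det *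
      (1 + (-B).trace * (s - t) + ((1 + (Polynomial.X : Polynomial ℝ) • (-B).map Polynomial.C).det.divX.divX.eval (s - t)) * (s - t) ^ 2) := by
    ext s
    rw [h s, Matrix.det_one_add_smul]
  rw [h2]
  have hd : HasDerivAt (fun s : ℝ => s - t) 1 t := (hasDerivAt_id t).sub_const t
  have hp : HasDerivAt (fun s : ℝ => ((1 + (Polynomial.X : Polynomial ℝ) • (-B).map Polynomial.C).det.divX.divX.eval (s - t))) _ t :=
    HasDerivAt.comp (h := fun s : ℝ => s - t) t
    ((1 + (Polynomial.X : Polynomial ℝ) • (-B).map Polynomial.C).det.divX.divX.hasDerivAt (t - t)) hd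
  have := (((hd.const_mul (-B).trace).const_add 1).add (hp.mul (hd.pow 2))).const_mul (1 - t • A).det
  refine this.congr_deriv ?_
  simp

lemma tsum_gB {n : ℕ} {β K e : ℝ} (hK : 1 ≤ K) (hβ : |β| ≤ K) (A : Matrix (Fin n) (Fin n) ℝ)
    (he : 0 ≤ e) (hA : ∀ i j, |A i j| ≤ e) (hq : n * (K * e) ≤ 1 / 4)
    (hD : ∀ t ∈ Set.Icc (0:ℝ) 1, 0 < (1 - t • A).det) :
    ∑' N, gB β A N = (1 - A).det ^ (-β) := by
  have hder : ∀ t ∈ Set.Icc (0:ℝ) 1, HasDerivAt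
      (fun t : ℝ => (∑' N, gB β A N * t ^ N) * (1 - t • A).det ^ β) 0 t := by
    intro t ht
    have hd := hD t ht
    have hB : (1 - t • A) * ((1 - t • A)⁻¹ * A) = A := by
      rw [← mul_assoc, Matrix.mul_nonsing_inv _ hd.ne'.isUnit, one_mul]
    have ht2 : |t| < 2 := by rw [abs_lt]; constructor <;> linarith [ht.1, ht.2]
    have h1 := hasDerivAt_G (β := β) hK hβ A he hA hq ht2
    rw [tsum_wB hK hβ A _ he hA hq ht2.le hB] at h1
    have h2 := (hasDerivAt_det A _ t hB).rpow_const (p := β) (Or.inl hd.ne')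
    refine (h1.mul h2).congr_deriv ?_
    rw [Real.rpow_sub_one hd.ne']
    field_simp
    ring
  have := constant_of_has_deriv_right_zero (fun t ht => (hder t ht).continuousAt.continuousWithinAt)
    (fun t ht => (hder t ⟨ht.1, ht.2.le⟩).hasDerivWithinAt) 1 (by simp)
  have h0 : ∑' N, gB β A N * (0:ℝ) ^ N = 1 := by
    rw [tsum_eq_single 0]
    · simp [gB_zero]
    · intro N hN; simp [hN]
  simp only [h0, zero_smul, sub_zero, Matrix.det_one, Real.one_rpow, one_pow, mul_one, one_smul] at this
  have hd := hD 1 (by simp)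
  rw [one_smul] at hd
  rw [Real.rpow_neg hd.le]
  exact eq_inv_of_mul_eq_one_left this

/-- fibre sizes of a labeling -/
def cntB {n : ℕ} (p : Σ N : ℕ, (Fin N → Fin n)) : Fin n → ℕ :=
  fun i => Fintype.card {a // p.2 a = i}

lemma exists_equiv_of_cnt {n N : ℕ} (f : Fin N → Fin n) (r : Fin n → ℕ)
    (h : cntB ⟨N, f⟩ = r) : ∃ e : ((i : Fin n) × Fin (r i)) ≃ Fin N, ∀ x, f (e x) = x.1 := by
  subst h
  refine ⟨(Equiv.sigmaCongrRight fun i => (Fintype.equivFin {a // f a = i}).symm).trans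
    (Equiv.sigmaFiberEquiv f), ?_⟩
  rintro ⟨i, x⟩
  exact ((Fintype.equivFin {a // f a = i}).symm x).2

lemma cnt_of_equiv {n N : ℕ} (f : Fin N → Fin n) (r : Fin n → ℕ)
    (e : ((i : Fin n) × Fin (r i)) ≃ Fin N) (he : ∀ x, f (e x) = x.1) : cntB ⟨N, f⟩ = r := by
  funext i
  have : {a // f a = i} ≃ Fin (r i) :=
    (e.symm.subtypeEquiv (q := fun x : (i : Fin n) × Fin (r i) => x.1 = i)
      (fun a => by rw [← he, Equiv.apply_symm_apply])).trans
      (Equiv.sigmaSubtype i)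
  unfold cntB
  rw [Fintype.card_congr this, Fintype.card_fin]

lemma card_fiber_e {n N : ℕ} (f : Fin N → Fin n) (r : Fin n → ℕ) (h : cntB ⟨N, f⟩ = r) :
    Nat.card {e : ((i : Fin n) × Fin (r i)) ≃ Fin N // ∀ x, f (e x) = x.1} =
      ∏ i, (r i).factorial := by
  obtain ⟨e0, he0⟩ := exists_equiv_of_cnt f r h
  have h1 : {e : ((i : Fin n) × Fin (r i)) ≃ Fin N // ∀ x, f (e x) = x.1} ≃
      {g : Perm (Fin N) // f ∘ g = f} :=
    (Equiv.equivCongr e0 (Equiv.refl (Fin N))).subtypeEquiv fun e => by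
      constructor
      · intro he
        funext a
        have := he (e0.symm a)
        simp only [Function.comp, Equiv.equivCongr_apply_apply, Equiv.refl_apply]
        rw [this, ← he0, Equiv.apply_symm_apply]
      · intro hg x
        have := congrFun hg (e0 x)
        simp only [Function.comp, Equiv.equivCongr_apply_apply, Equiv.refl_apply,
          Equiv.symm_apply_apply] at this
        rw [this, he0]
  rw [Nat.card_congr h1, Nat.card_eq_fintype_card, DomMulAct.stabilizer_card]
  refine Finset.prod_congr rfl fun i _ => ?_
  congr 1
  exact congrFun h i

lemma sum_cnt {n : ℕ} (p : Σ N : ℕ, (Fin N → Fin n)) : ∑ i, cntB p i = p.1 := by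
  obtain ⟨e, -⟩ := exists_equiv_of_cnt p.2 (cntB p) rfl
  have := Fintype.card_congr e
  simpa using this

lemma card_cnt_fiber {n : ℕ} (r : Fin n → ℕ) :
    Nat.card {p : Σ N : ℕ, (Fin N → Fin n) // cntB p = r} * ∏ i, (r i).factorial =
      (∑ i, r i).factorial := by
  set N := ∑ i, r i with hN
  have h1 : {p : Σ N : ℕ, (Fin N → Fin n) // cntB p = r} ≃ {f : Fin N → Fin n // cntB ⟨N, f⟩ = r} :=
    { toFun := fun p => ⟨fun a => p.1.2 (Fin.cast (by rw [hN, ← sum_cnt p.1, p.2]) a), by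
        obtain ⟨⟨M, f⟩, hp⟩ := p
        have : M = N := by rw [hN, ← hp, sum_cnt]
        subst this
        exact hp⟩
      invFun := fun f => ⟨⟨N, f.1⟩, f.2⟩
      left_inv := by
        rintro ⟨⟨M, f⟩, hp⟩
        have : M = N := by rw [hN, ← hp, sum_cnt]
        subst this
        rfl
      right_inv := fun f => rfl }
  have h2 : (((i : Fin n) × Fin (r i)) ≃ Fin N) ≃ 
    Σ f : {f : Fin N → Fin n // cntB ⟨N, f⟩ = r}, {e : ((i : Fin n) × Fin (r i)) ≃ Fin N // ∀ x, f.1 (e x) = x.1} :=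
    { toFun := fun e => ⟨⟨fun a => (e.symm a).1, cnt_of_equiv _ r e (by simp)⟩, ⟨e, by simp⟩⟩
      invFun := fun p => p.2.1
      left_inv := fun e => rfl
      right_inv := by
        rintro ⟨⟨f, hf⟩, ⟨e, he⟩⟩
        have : f = fun a => (e.symm a).1 := by
          funext a; rw [← he, Equiv.apply_symm_apply]
        subst this
        rfl }
  have h3 := Nat.card_congr h2
  rw [Nat.card_sigma] at h3
  rw [Finset.sum_congr rfl (fun f _ => card_fiber_e f.1 r f.2)] at h3
  rw [Nat.card_congr h1]
  rw [Finset.sum_const, smul_eq_mul, Finset.card_univ, ← Nat.card_eq_fintype_card] at h3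
  rw [← h3, Nat.card_eq_fintype_card]
  have e : ((i : Fin n) × Fin (r i)) ≃ Fin N := Fintype.equivFinOfCardEq (by simp [hN])
  rw [Fintype.card_equiv e]
  simp [hN]

lemma tsum_r {n : ℕ} {β K e : ℝ} (hK : 1 ≤ K) (hβ : |β| ≤ K) (A : Matrix (Fin n) (Fin n) ℝ)
    (he : 0 ≤ e) (hA : ∀ i j, |A i j| ≤ e) (hq : n * (K * e) ≤ 1 / 4) :
    ∑' r : Fin n → ℕ, ((∏ i, (r i).factorial : ℕ) : ℝ)⁻¹ * permB β (repA A r) =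
      ∑' N, gB β A N := by
  let h : (Σ N : ℕ, (Fin N → Fin n)) → ℝ := fun p =>
    (p.1.factorial : ℝ)⁻¹ * permB β (A.submatrix p.2 p.2)
  have hs : Summable h := by
    have hu : Summable fun p : (Σ N : ℕ, (Fin N → Fin n)) => (K * e) ^ p.1 := by
      rw [summable_sigma_of_nonneg (fun p => by positivity)]
      refine ⟨fun N => (hasSum_fintype _).summable, ?_⟩
      refine Summable.of_nonneg_of_le (fun N => tsum_nonneg fun _ => by positivity) (fun N => ?_)
        (summable_geometric_of_lt_one (r := 1 / 4) (by norm_num) (by norm_num))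
      simp only [tsum_fintype]
      rw [Finset.sum_const, Finset.card_univ, Fintype.card_fun, nsmul_eq_mul]
      simp only [Fintype.card_fin, Nat.cast_pow]
      rw [← mul_pow]
      exact pow_le_pow_left₀ (by positivity) hq N
    refine Summable.of_norm_bounded hu fun p => ?_
    have := abs_permB_le hK hβ (A.submatrix p.2 p.2) (fun i j => hA _ _)
    rw [Fintype.card_fin] at this
    rw [Real.norm_eq_abs, abs_mul, abs_inv, Nat.abs_cast, inv_mul_le_iff₀ (by positivity)]
    exact this
  have e1 : ∑' p, h p = ∑' N, gB β A N := by
    rw [hs.tsum_sigma]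
    congr 1; funext N
    rw [tsum_fintype, gB, sumB, div_eq_inv_mul, Finset.mul_sum]
  rw [← e1, ← (Equiv.sigmaFiberEquiv (cntB (n := n))).tsum_eq]
  have hs' := (Equiv.sigmaFiberEquiv (cntB (n := n))).summable_iff.2 hs
  rw [Summable.tsum_sigma (by exact hs')]
  congr 1; funext r
  have hc : ∀ p : {p : Σ N : ℕ, (Fin N → Fin n) // cntB p = r},
      h (Equiv.sigmaFiberEquiv (cntB (n := n)) ⟨r, p⟩) =
        ((∑ i, r i).factorial : ℝ)⁻¹ * permB β (repA A r) := by
    rintro ⟨⟨N, f⟩, hp⟩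
    simp only [Equiv.sigmaFiberEquiv, Equiv.coe_fn_mk, h]
    have : N = ∑ i, r i := by rw [← hp, sum_cnt]
    obtain ⟨e, he⟩ := exists_equiv_of_cnt f r hp
    rw [← permB_reindex e]
    congr 1
    · rw [this]
    · congr 1
      ext x y
      simp [repA, he]
  rw [tsum_congr hc, tsum_const, nsmul_eq_mul, ← card_cnt_fiber r]
  have hne : (Nat.card {p : Σ N : ℕ, (Fin N → Fin n) // cntB p = r} : ℝ) ≠ 0 := by
    intro h0
    have := card_cnt_fiber r
    rw [Nat.cast_eq_zero.1 h0, zero_mul] at this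
    exact (Nat.factorial_ne_zero _) this.symm
  rw [Nat.cast_mul, mul_inv, ← mul_assoc, ← mul_assoc, mul_inv_cancel₀ hne, one_mul]

lemma exists_det_pos (n : ℕ) : ∃ δ > (0:ℝ), ∀ A : Matrix (Fin n) (Fin n) ℝ,
    (∀ i j, |A i j| < δ) → 0 < (1 - A).det := by
  have hc : Continuous (fun A : Fin n → Fin n → ℝ => (1 - Matrix.of A).det) := by
    apply Continuous.matrix_det
    refine continuous_const.sub ?_
    exact continuous_id
  have h0 : (0:ℝ) < (fun A : Fin n → Fin n → ℝ => (1 - Matrix.of A).det) 0 := by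
    simp
  have := (hc.tendsto 0).eventually_const_lt h0
  obtain ⟨δ, hδ, H⟩ := Metric.eventually_nhds_iff.1 this
  refine ⟨δ, hδ, fun A hA => ?_⟩
  refine @H (fun i j => A i j) ?_
  rw [dist_pi_lt_iff hδ]
  intro i
  rw [dist_pi_lt_iff hδ]
  intro j
  simpa using hA i j

/-- The β-extended MacMahon Master Theorem:
`Σ_r (1/r!) perm_β A(n^r,n^r) = det(I - A)^{-β}` for sufficiently small `A`. -/
theorem beta_extended_MMT (n : ℕ) (β : ℝ) :
    ∃ ε > (0 : ℝ), ∀ A : Matrix (Fin n) (Fin n) ℝ, (∀ i j, |A i j| < ε) →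
      ∑' r : Fin n → ℕ, ((∏ i, (r i).factorial : ℕ) : ℝ)⁻¹ * permB β (repA A r)
        = Matrix.det (1 - A) ^ (-β) := by
  obtain ⟨δ, hδ, hdet⟩ := exists_det_pos n
  set K : ℝ := max 1 |β| with hKdef
  have hK : 1 ≤ K := le_max_left _ _
  have hβ : |β| ≤ K := le_max_right _ _
  have hpos : 0 < 1 / (4 * (n + 1) * K) := by positivity
  refine ⟨min δ (1 / (4 * (n + 1) * K)), lt_min hδ hpos, fun A hA => ?_⟩
  have hA' : ∀ i j, |A i j| ≤ 1 / (4 * (n + 1) * K) := fun i j =>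
    ((hA i j).trans_le (min_le_right _ _)).le
  have hq : n * (K * (1 / (4 * (n + 1) * K))) ≤ 1 / 4 := by
    have : n * (K * (1 / (4 * (n + 1) * K))) = (n / (n + 1)) * (1 / 4 : ℝ) := by
      field_simp
    rw [this]
    have h2 : (n / (n + 1) : ℝ) ≤ 1 := by
      rw [div_le_one (by positivity)]; linarith
    linarith
  rw [tsum_r hK hβ A hpos.le hA' hq]
  refine tsum_gB hK hβ A hpos.le hA' hq fun t ht => hdet _ fun i j => ?_
  rw [Matrix.smul_apply, smul_eq_mul, abs_mul, abs_of_nonneg ht.1]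
  calc t * |A i j| ≤ 1 * |A i j| := by gcongr; exact ht.2
    _ = |A i j| := one_mul _
    _ < δ := (hA i j).trans_le (min_le_left _ _)
end
end

section
/- (Submatrix MMT, β = -1 case) Let B be n'×n', A be n×n, U be n'×n, V be n×n' matrices over a commutative ring. Then Σ_{r ∈ {0,1}^n} det [[B, U(n^r)],[V(n^r), A(n^r,n^r)]] = det [[B, -U],[-V, I + A]], where U(n^r), V(n^r), A(n^r,n^r) denote the submatrices obtained by keeping only the columns/rows indexed by {i : r_i = 1}. -/
open scoped Classical

theorem mmt_term {n' n : ℕ} {R : Type*} [CommRing R]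
    (B : Matrix (Fin n') (Fin n') R) (U : Matrix (Fin n') (Fin n) R)
    (V : Matrix (Fin n) (Fin n') R) (A : Matrix (Fin n) (Fin n) R) (S : Finset (Fin n)) :
    Matrix.det (Matrix.of (Sum.elim (fun i => Sum.elim (B i) (U i))
      (S.piecewise (fun i => Sum.elim (V i) (A i))
        (fun i => Sum.elim 0 ((1 : Matrix (Fin n) (Fin n) R) i))))) =
        Matrix.det (Matrix.fromBlocks B
          (U.submatrix id (Subtype.val : {x // x ∈ S} → Fin n))
          (V.submatrix (Subtype.val : {x // x ∈ S} → Fin n) id)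
          (A.submatrix (Subtype.val : {x // x ∈ S} → Fin n) Subtype.val)) := by
  let e : (Fin n' ⊕ {x // x ∈ S}) ⊕ {x // ¬ x ∈ S} ≃ Fin n' ⊕ Fin n :=
    (Equiv.sumAssoc _ _ _).trans (Equiv.sumCongr (Equiv.refl _) (Equiv.sumCompl (· ∈ S)))
  rw [← Matrix.det_submatrix_equiv_self e]
  rw [← Matrix.fromBlocks_toBlocks (Matrix.submatrix _ e e)]
  have h21 : (Matrix.submatrix (Matrix.of (Sum.elim (fun i => Sum.elim (B i) (U i))
      (S.piecewise (fun i => Sum.elim (V i) (A i))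
        (fun i => Sum.elim 0 ((1 : Matrix (Fin n) (Fin n) R) i))))) e e).toBlocks₂₁ = 0 := by
    ext i j
    rcases j with j | j
    · simp [Matrix.toBlocks₂₁, e, Finset.piecewise, i.2]
    · have : (i : Fin n) ≠ j := fun h => i.2 (h ▸ j.2)
      simp [Matrix.toBlocks₂₁, e, Finset.piecewise, i.2, Matrix.one_apply, this]
  have h22 : (Matrix.submatrix (Matrix.of (Sum.elim (fun i => Sum.elim (B i) (U i))
      (S.piecewise (fun i => Sum.elim (V i) (A i))
        (fun i => Sum.elim 0 ((1 : Matrix (Fin n) (Fin n) R) i))))) e e).toBlocks₂₂ = 1 := by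
    ext i j
    simp [Matrix.toBlocks₂₂, e, Finset.piecewise, i.2, Matrix.one_apply, Subtype.ext_iff]
  rw [h21, h22, Matrix.det_fromBlocks_zero₂₁, Matrix.det_one, mul_one]
  congr 1
  ext i j
  rcases i with i | i <;> rcases j with j | j <;>
    simp [Matrix.toBlocks₁₁, e, Finset.piecewise]

theorem mmt_sign {n' n : ℕ} {R : Type*} [CommRing R]
    (B : Matrix (Fin n') (Fin n') R) (U : Matrix (Fin n') (Fin n) R)
    (V : Matrix (Fin n) (Fin n') R) (A : Matrix (Fin n) (Fin n) R) :
    Matrix.det (Matrix.fromBlocks B (-U) (-V) A) = Matrix.det (Matrix.fromBlocks B U V A) := by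
  let D : Matrix (Fin n' ⊕ Fin n) (Fin n' ⊕ Fin n) R := Matrix.fromBlocks 1 0 0 (-1)
  have hD : D * D = 1 := by simp [D, Matrix.fromBlocks_multiply]
  have h : Matrix.fromBlocks B (-U) (-V) A = D * Matrix.fromBlocks B U V A * D := by
    simp [D, Matrix.fromBlocks_multiply]
  rw [h, Matrix.det_mul_right_comm, hD, one_mul]



/-- Submatrix MMT, β = -1 case: summing the determinants of the block matrices
over all principal submatrices of `A` (keeping `B` intact) yields
`det [[B, -U], [-V, I + A]]`. -/
theorem submatrix_MMT_beta_neg_one {n' n : ℕ} {R : Type*} [CommRing R]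
    (B : Matrix (Fin n') (Fin n') R) (U : Matrix (Fin n') (Fin n) R)
    (V : Matrix (Fin n) (Fin n') R) (A : Matrix (Fin n) (Fin n) R) :
    ∑ S : Finset (Fin n),
        Matrix.det (Matrix.fromBlocks B
          (U.submatrix id (Subtype.val : {x // x ∈ S} → Fin n))
          (V.submatrix (Subtype.val : {x // x ∈ S} → Fin n) id)
          (A.submatrix (Subtype.val : {x // x ∈ S} → Fin n) Subtype.val))
      = Matrix.det (Matrix.fromBlocks B (-U) (-V) (1 + A)) := by

  rw [mmt_sign]
  have key := MultilinearMap.map_add_univ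
    ((Matrix.detRowAlternating (n := Fin n' ⊕ Fin n) (R := R)).toMultilinearMap.currySum
      (fun i => Sum.elim (B i) (U i)))
    (fun i => Sum.elim (V i) (A i))
    (fun i => Sum.elim 0 ((1 : Matrix (Fin n) (Fin n) R) i))
  simp only [← mmt_term]
  refine key.symm.trans ?_
  refine congrArg Matrix.det ?_
  ext i j
  rcases i with i | i <;> rcases j with j | j <;> simp [add_comm]
end

section
/- (Partial Permutation MMT) For an n×n matrix A and n-vectors θ, φ, Σ_{r} (1/r!) pperm_{β,θ,φ} A(n^r,n^r) = exp(θ(I-A)^{-1}φ^T) / det(I-A)^β, where the sum is over all n-tuples r of non-negative integers, and pperm_{β,θ,φ} A(n^r,n^r) uses the vectors with entry θ_i (resp. φ_i) repeated r_i times. -/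
open scoped Classical
open Matrix

noncomputable section

/-- A partial permutation (injective partial map) of `α`: a domain together with
an injection of the domain into `α`. -/
abbrev PPerm (α : Type*) [Fintype α] [DecidableEq α] :=
  (D : Finset α) × ({x // x ∈ D} ↪ α)

variable {α : Type*} [Fintype α] [DecidableEq α]

/-- The partial function determined by a partial permutation. -/
def pfun (ψ : PPerm α) : α → Option α :=
  fun x => if h : x ∈ ψ.1 then some (ψ.2 ⟨x, h⟩) else none

/-- `k`-fold iteration of a partial permutation. -/
def piter (ψ : PPerm α) (k : ℕ) (x : α) : Option α :=
  (fun o => o.bind (pfun ψ))^[k] (some x)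

/-- The image of a partial permutation. -/
def pim (ψ : PPerm α) : Finset α := Finset.univ.image fun d => ψ.2 d

/-- `x` lies on a closed cycle of the partial permutation `ψ`. -/
def isCyc (ψ : PPerm α) (x : α) : Prop :=
  ∃ k ∈ Finset.range (Fintype.card α + 1), k ≠ 0 ∧ piter ψ k x = some x

/-- The forward orbit of `x` under `ψ`. -/
def porb (ψ : PPerm α) (x : α) : Finset α :=
  Finset.univ.filter fun y => ∃ k ∈ Finset.range (Fintype.card α + 1), piter ψ k x = some y

/-- The number of cycles `C(π_ψ)` of the permutation part of `ψ`. -/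
def pCycleCount (ψ : PPerm α) : ℕ :=
  ((Finset.univ.filter fun x => isCyc ψ x).image (porb ψ)).card

/-- The `(β,θ,φ)`-extended partial permanent of a matrix. -/
def ppermB {R : Type*} [CommRing R] (β : R) (θ φ : α → R) (M : Matrix α α R) : R :=
  ∑ ψ : PPerm α, β ^ pCycleCount ψ * (∏ d : {x // x ∈ ψ.1}, M d (ψ.2 d)) *
    (∏ j ∈ Finset.univ \ pim ψ, θ j) * (∏ k ∈ Finset.univ \ ψ.1, φ k)

/-- Transitive closure of the graph of a partial map. -/
def TG {α : Type*} (g : α → Option α) : α → α → Prop :=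
  Relation.TransGen (fun x y => g x = some y)

lemma TG_lift {α α' : Type*} {g : α → Option α} {g' : α' → Option α'} (f : α → α')
    (h : ∀ a b, g a = some b → TG g' (f a) (f b)) {a b : α} (hab : TG g a b) :
    TG g' (f a) (f b) := by
  induction hab with
  | single h1 => exact h _ _ h1
  | tail _ h1 ih => exact Relation.TransGen.trans ih (h _ _ h1)

/-- Number of cycles. -/
def cc {α : Type*} [Fintype α] (g : α → Option α) : ℕ :=
  ((Finset.univ.filter fun x => TG g x x).image
    (fun x => Finset.univ.filter fun y => TG g x y)).card

lemma piter_succ (ψ : PPerm α) (k : ℕ) (x : α) :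
    piter ψ (k+1) x = (piter ψ k x).bind (pfun ψ) := by
  simp [piter, Function.iterate_succ_apply']

lemma piter_add (ψ : PPerm α) (i j : ℕ) (x : α) :
    piter ψ (i+j) x = (piter ψ i x).bind (piter ψ j) := by
  induction j with
  | zero => cases h : piter ψ i x <;> simp [piter]
  | succ j ih =>
    rw [← add_assoc, piter_succ, ih, Option.bind_assoc]
    congr 1
    funext z
    rw [piter_succ]

lemma piter_bound (ψ : PPerm α) (k : ℕ) (x y : α) (h : piter ψ k x = some y) :
    ∃ k' < Fintype.card α, piter ψ k' x = some y := by
  have hex : ∃ k, piter ψ k x = some y := ⟨k, h⟩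
  refine ⟨Nat.find hex, ?_, Nat.find_spec hex⟩
  set m := Nat.find hex with hm
  have hms : piter ψ m x = some y := Nat.find_spec hex
  by_contra hlt
  push Not at hlt
  have hsome : ∀ i : Fin (m+1), ∃ z, piter ψ i x = some z := by
    intro i
    have : piter ψ (i + (m - i)) x = some y := by
      rw [Nat.add_sub_cancel' (by omega)]; exact hms
    rw [piter_add] at this
    cases h : piter ψ i x with
    | none => simp [h] at this
    | some z => exact ⟨z, rfl⟩
  choose F hF using hsome
  obtain ⟨i, j, hne, hij⟩ := Fintype.exists_ne_map_eq_of_card_lt F (by simp; omega)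
  have key : ∀ i j : Fin (m+1), i < j → F i = F j → False := by
    intro i j hlt hij
    have h1 : piter ψ (j + (m - j)) x = some y := by
      rw [Nat.add_sub_cancel' (by omega)]; exact hms
    have h2 : piter ψ (i + (m - j)) x = some y := by
      rw [piter_add, hF, hij, ← hF, ← piter_add]; exact h1
    have h3 := Nat.find_min' hex h2
    have : (i:ℕ) < j := hlt
    omega
  rcases lt_or_gt_of_ne hne with h | h
  · exact key i j h hij
  · exact key j i h hij.symm

lemma piter_reach (ψ : PPerm α) (k : ℕ) (x y : α) (h : piter ψ k x = some y) :
    Relation.ReflTransGen (fun x y => pfun ψ x = some y) x y := by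
  induction k generalizing y with
  | zero =>
    simp [piter] at h
    subst h
    exact .refl
  | succ k ih =>
    rw [piter_succ, Option.bind_eq_some_iff] at h
    obtain ⟨z, hz, hzy⟩ := h
    exact (ih z hz).tail hzy

lemma reach_piter (ψ : PPerm α) (x y : α)
    (h : Relation.ReflTransGen (fun x y => pfun ψ x = some y) x y) :
    ∃ k, piter ψ k x = some y := by
  induction h with
  | refl => exact ⟨0, by simp [piter]⟩
  | tail _ h ih =>
    obtain ⟨k, hk⟩ := ih
    exact ⟨k+1, by rw [piter_succ, hk]; exact h⟩

lemma isCyc_iff (ψ : PPerm α) (x : α) : isCyc ψ x ↔ TG (pfun ψ) x x := by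
  constructor
  · rintro ⟨k, -, hk0, hk⟩
    obtain ⟨k, rfl⟩ := Nat.exists_eq_succ_of_ne_zero hk0
    rw [Nat.succ_eq_add_one, piter_succ, Option.bind_eq_some_iff] at hk
    obtain ⟨z, hz, hzx⟩ := hk
    exact Relation.TransGen.tail' (piter_reach ψ k x z hz) hzx
  · intro h
    obtain ⟨z, hz, hzx⟩ := Relation.TransGen.tail'_iff.1 h
    obtain ⟨k, hk⟩ := reach_piter ψ _ _ hz
    obtain ⟨k, hk', hk⟩ := piter_bound ψ _ _ _ hk
    exact ⟨k+1, by simp; omega, by simp, by rw [piter_succ, hk]; exact hzx⟩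

lemma mem_porb_iff (ψ : PPerm α) (x y : α) :
    y ∈ porb ψ x ↔ Relation.ReflTransGen (fun x y => pfun ψ x = some y) x y := by
  simp only [porb, Finset.mem_filter, Finset.mem_univ, true_and]
  constructor
  · rintro ⟨k, -, hk⟩
    exact piter_reach ψ k x y hk
  · intro h
    obtain ⟨k, hk⟩ := reach_piter ψ _ _ h
    obtain ⟨k, hk', hk⟩ := piter_bound ψ _ _ _ hk
    exact ⟨k, by simp; omega, hk⟩

lemma pCycleCount_eq (ψ : PPerm α) : pCycleCount ψ = cc (pfun ψ) := by
  unfold pCycleCount cc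
  have h1 : (Finset.univ.filter fun x => isCyc ψ x) =
      Finset.univ.filter fun x => TG (pfun ψ) x x := by
    ext x; simp [isCyc_iff]
  rw [h1]
  have h2 : ∀ x, TG (pfun ψ) x x → porb ψ x = Finset.univ.filter fun y => TG (pfun ψ) x y := by
    intro x hx
    ext y
    simp only [mem_porb_iff, Finset.mem_filter, Finset.mem_univ, true_and]
    exact ⟨fun h => Relation.TransGen.trans_left hx h, fun h => h.to_reflTransGen⟩
  refine congrArg Finset.card ?_
  ext S
  simp only [Finset.mem_image, Finset.mem_filter, Finset.mem_univ, true_and]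
  constructor
  · rintro ⟨x, hx, rfl⟩
    exact ⟨x, hx, (h2 x hx).symm⟩
  · rintro ⟨x, hx, rfl⟩
    exact ⟨x, hx, h2 x hx⟩

lemma card_image_ker {ι β γ : Type*} [DecidableEq β] [DecidableEq γ] (s : Finset ι)
    (f : ι → β) (g : ι → γ) (h : ∀ a ∈ s, ∀ b ∈ s, (f a = f b ↔ g a = g b)) :
    (s.image f).card = (s.image g).card := by
  classical
  have hf : (s.image f).card = ((s.image fun a => (f a, g a))).card := by
    rw [show s.image f = (s.image fun a => (f a, g a)).image Prod.fst by
      rw [Finset.image_image]; rfl]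
    refine Finset.card_image_of_injOn ?_
    intro p hp q hq hpq
    simp at hp hq
    obtain ⟨a, ha, rfl⟩ := hp
    obtain ⟨b, hb, rfl⟩ := hq
    simp at hpq
    simp [hpq, (h a ha b hb).1 hpq]
  have hg : (s.image g).card = ((s.image fun a => (f a, g a))).card := by
    rw [show s.image g = (s.image fun a => (f a, g a)).image Prod.snd by
      rw [Finset.image_image]; rfl]
    refine Finset.card_image_of_injOn ?_
    intro p hp q hq hpq
    simp at hp hq
    obtain ⟨a, ha, rfl⟩ := hp
    obtain ⟨b, hb, rfl⟩ := hq
    simp at hpq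
    simp [hpq, (h a ha b hb).2 hpq]
  rw [hf, hg]

lemma orb_eq_iff {α : Type*} [Fintype α] (g : α → Option α) (x y : α) (hx : TG g x x)
    (hy : TG g y y) :
    ((Finset.univ.filter fun z => TG g x z) = (Finset.univ.filter fun z => TG g y z)) ↔
      TG g x y ∧ TG g y x := by
  constructor
  · intro h
    constructor
    · have : y ∈ (Finset.univ.filter fun z => TG g x z) := by rw [h]; simpa using hy
      simpa using this
    · have : x ∈ (Finset.univ.filter fun z => TG g y z) := by rw [← h]; simpa using hx
      simpa using this
  · rintro ⟨h1, h2⟩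
    ext z
    simp only [Finset.mem_filter, Finset.mem_univ, true_and]
    exact ⟨fun h => Relation.TransGen.trans h2 h, fun h => Relation.TransGen.trans h1 h⟩

lemma cc_sub {α α' : Type*} [Fintype α] [Fintype α'] (g : α → Option α)
    (g' : α' → Option α') (ι : α → α') (h : ∀ y z, TG g y z ↔ TG g' (ι y) (ι z)) :
    cc g = (((Finset.univ.filter fun x => TG g x x).image ι).image
      (fun x => Finset.univ.filter fun y => TG g' x y)).card := by
  unfold cc
  rw [Finset.image_image]
  apply card_image_ker
  intro a ha b hb
  simp only [Finset.mem_filter, Finset.mem_univ, true_and] at ha hb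
  simp only [Function.comp]
  rw [orb_eq_iff g a b ha hb, orb_eq_iff g' _ _ ((h _ _).1 ha) ((h _ _).1 hb), h, h]

lemma cc_eq {α α' : Type*} [Fintype α] [Fintype α'] (g : α → Option α)
    (g' : α' → Option α') (ι : α → α') (h : ∀ y z, TG g y z ↔ TG g' (ι y) (ι z))
    (h2 : ∀ x, TG g' x x → ∃ y, TG g' x (ι y) ∧ TG g' (ι y) x) : cc g' = cc g := by
  rw [cc_sub g g' ι h]
  unfold cc
  congr 1
  ext S
  simp only [Finset.mem_image, Finset.mem_filter, Finset.mem_univ, true_and,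
    exists_exists_and_eq_and]
  constructor
  · rintro ⟨x, hx, rfl⟩
    obtain ⟨y, h1, h3⟩ := h2 x hx
    have hy : TG g' (ι y) (ι y) := Relation.TransGen.trans h3 h1
    exact ⟨y, (h _ _).2 hy, (orb_eq_iff g' _ _ hy hx).2 ⟨h3, h1⟩⟩
  · rintro ⟨y, hy, rfl⟩
    exact ⟨ι y, (h _ _).1 hy, rfl⟩
/-- Partial permutations as injective partial functions. -/
abbrev PP (α : Type*) :=
  {g : α → Option α // ∀ a b y, g a = some y → g b = some y → a = b}

instance PPfin {α : Type*} [Fintype α] : Fintype (PP α) := Subtype.fintype _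

/-- Selector with a fixed decidability instance. -/
def sel {R : Type*} (p : Prop) (x y : R) : R := @ite R p (Classical.propDecidable p) x y

lemma sel_pos {R : Type*} {p : Prop} (h : p) (x y : R) : sel p x y = x := if_pos h

lemma sel_neg {R : Type*} {p : Prop} (h : ¬ p) (x y : R) : sel p x y = y := if_neg h

/-- weight -/
def wt {α R : Type*} [Fintype α] [CommRing R] (θ φ : α → R) (M : α → α → R)
    (g : α → Option α) : R :=
  (∏ x, (g x).elim (φ x) (M x)) * ∏ j, sel (∃ x, g x = some j) 1 (θ j)

/-- The partial permanent, second form. -/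
def pp2 {α R : Type*} [Fintype α] [CommRing R] (β : R) (θ φ : α → R) (M : α → α → R) : R :=
  ∑ g : PP α, β ^ cc g.1 * wt θ φ M g.1

lemma pfun_inj (ψ : PPerm α) (a b y : α) (ha : pfun ψ a = some y) (hb : pfun ψ b = some y) :
    a = b := by
  unfold pfun at ha hb
  split_ifs at ha hb with h1 h2
  simp only [Option.some.injEq] at ha hb
  have := ψ.2.injective (ha.trans hb.symm)
  simpa using this

lemma pfun_bij : Function.Bijective
    (fun ψ : PPerm α => (⟨pfun ψ, pfun_inj ψ⟩ : PP α)) := by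
  constructor
  · rintro ⟨D, e⟩ ⟨D', e'⟩ h
    simp only [Subtype.mk.injEq] at h
    have hD : D = D' := by
      ext x
      have := congrFun h x
      simp only [pfun] at this
      by_cases h1 : x ∈ D <;> by_cases h2 : x ∈ D' <;> simp [h1, h2] at this ⊢
    subst hD
    congr 1
    ext ⟨x, hx⟩
    have := congrFun h x
    simpa [pfun, hx] using this
  · rintro ⟨g, hg⟩
    have hs : ∀ x : {x // x ∈ Finset.univ.filter fun x => (g x).isSome}, (g x.1).isSome := by
      intro x; exact (Finset.mem_filter.1 x.2).2
    refine ⟨⟨Finset.univ.filter fun x => (g x).isSome,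
      ⟨fun x => (g x.1).get (hs x), ?_⟩⟩, ?_⟩
    · intro x y hxy
      apply Subtype.ext
      refine hg x y ((g x.1).get (hs x)) (by simp) ?_
      simp only at hxy
      rw [hxy]; simp
    · apply Subtype.ext
      funext x
      simp only [pfun]
      by_cases h : (g x).isSome
      · rw [dif_pos (by simpa using h)]
        exact Option.some_get _
      · rw [dif_neg (by simpa using h)]
        simpa using (Option.not_isSome_iff_eq_none.1 h).symm

lemma ppermB_eq {R : Type*} [CommRing R] (β : R) (θ φ : α → R) (M : Matrix α α R) :
    ppermB β θ φ M = pp2 β θ φ (fun x y => M x y) := by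
  unfold ppermB pp2
  refine Fintype.sum_bijective _ pfun_bij _ _ ?_
  intro ψ
  simp only
  rw [pCycleCount_eq, mul_assoc, mul_assoc]
  congr 1
  unfold wt
  have h1 : ∏ x, ((pfun ψ x).elim (φ x) (fun y => M x y)) =
      (∏ d : {x // x ∈ ψ.1}, M d (ψ.2 d)) * (∏ k ∈ Finset.univ \ ψ.1, φ k) := by
    rw [← Finset.prod_sdiff (Finset.subset_univ ψ.1), mul_comm]
    congr 1
    · rw [← Finset.prod_coe_sort]
      refine Finset.prod_congr rfl ?_
      rintro ⟨x, hx⟩ -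
      simp [pfun, hx]
    · refine Finset.prod_congr rfl ?_
      intro x hx
      simp at hx
      simp [pfun, hx]
  have h2 : (∏ j, sel (∃ x, pfun ψ x = some j) 1 (θ j)) =
      ∏ j ∈ Finset.univ \ pim ψ, θ j := by
    rw [← Finset.prod_sdiff (Finset.subset_univ (pim ψ))]
    have hm : ∀ j, j ∈ pim ψ ↔ ∃ x, pfun ψ x = some j := by
      intro j
      simp only [pim, pfun, Finset.mem_image, Finset.mem_univ, true_and, Subtype.exists]
      constructor
      · rintro ⟨a, ha, h⟩
        exact ⟨a, by simp [ha, h]⟩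
      · rintro ⟨a, h⟩
        split_ifs at h with ha
        exact ⟨a, ha, by simpa using h⟩
    rw [Finset.prod_eq_one (s := pim ψ), mul_one]
    · refine Finset.prod_congr rfl ?_
      intro x hx
      rw [Finset.mem_sdiff, hm] at hx
      rw [sel_neg hx.2]
    · intro x hx
      rw [hm] at hx
      rw [sel_pos hx]
  rw [h1, h2]
  ring

/-! ### Reindexing -/

lemma pp2_equiv {α α' R : Type*} [Fintype α] [Fintype α'] [CommRing R] (e : α ≃ α') (β : R)
    (θ φ : α' → R) (M : α' → α' → R) :
    pp2 β (fun x => θ (e x)) (fun x => φ (e x)) (fun x y => M (e x) (e y)) = pp2 β θ φ M := by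
  unfold pp2
  let F : PP α ≃ PP α' :=
    { toFun := fun g => ⟨fun x => (g.1 (e.symm x)).map e, by
        intro a b y ha hb
        simp only [Option.map_eq_some_iff] at ha hb
        obtain ⟨u, hu, rfl⟩ := ha
        obtain ⟨v, hv, hvu⟩ := hb
        have := e.injective hvu
        subst this
        exact e.symm.injective (g.2 _ _ _ hu hv)⟩
      invFun := fun g => ⟨fun x => (g.1 (e x)).map e.symm, by
        intro a b y ha hb
        simp only [Option.map_eq_some_iff] at ha hb
        obtain ⟨u, hu, rfl⟩ := ha
        obtain ⟨v, hv, hvu⟩ := hb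
        have := e.symm.injective hvu
        subst this
        exact e.injective (g.2 _ _ _ hu hv)⟩
      left_inv := by
        intro g; apply Subtype.ext; funext x; simp
      right_inv := by
        intro g; apply Subtype.ext; funext x; simp }
  refine Fintype.sum_equiv F _ _ ?_
  intro g
  have hF : ∀ x, (F g).1 x = (g.1 (e.symm x)).map e := fun x => rfl
  have hF' : ∀ x, (F g).1 (e x) = (g.1 x).map e := fun x => by simp [hF]
  congr 1
  · congr 1
    symm
    apply cc_eq _ _ e
    · intro y z
      constructor
      · intro h
        refine TG_lift e ?_ h
        intro a b hab
        refine Relation.TransGen.single ?_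
        simp [hF', hab]
      · intro h
        have := TG_lift (g' := g.1) e.symm ?_ h
        · simpa using this
        · intro a b hab
          rw [hF] at hab
          simp only [Option.map_eq_some_iff] at hab
          obtain ⟨u, hu, rfl⟩ := hab
          refine Relation.TransGen.single ?_
          simpa using hu
    · intro x hx
      exact ⟨e.symm x, by simpa using hx, by simpa using hx⟩
  · unfold wt
    congr 1
    · refine Fintype.prod_equiv e _ _ ?_
      intro x
      rw [hF']
      cases g.1 x <;> simp
    · refine Fintype.prod_equiv e _ _ ?_
      intro x
      have : (∃ z, (F g).1 z = some (e x)) ↔ ∃ z, g.1 z = some x := by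
        rw [← e.exists_congr_right]
        simp [hF']
      simp only [this]
/-! ### Insertion of a point -/

/-- Insert the new point without a predecessor in the old set. -/
def insS {α : Type*} (g : α → Option α) (o : Option (Option α)) : Option α → Option (Option α)
  | none => o
  | some u => (g u).map some

/-- Insert the new point after the point `a`. -/
def insA {α : Type*} (g : α → Option α) (a : α) : Option α → Option (Option α)
  | none => (g a).map some
  | some u => sel (u = a) (some none) ((g u).map some)

lemma TG_insS {α : Type*} (g : α → Option α) (o : Option (Option α)) (y : α) (q : Option α) :
    TG (insS g o) (some y) q ↔ ∃ z, q = some z ∧ TG g y z := by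
  constructor
  · intro h
    induction h with
    | single h =>
      simp only [insS, Option.map_eq_some_iff] at h
      obtain ⟨z, hz, rfl⟩ := h
      exact ⟨z, rfl, Relation.TransGen.single hz⟩
    | tail _ h ih =>
      obtain ⟨u, rfl, hu⟩ := ih
      simp only [insS, Option.map_eq_some_iff] at h
      obtain ⟨z, hz, rfl⟩ := h
      exact ⟨z, rfl, Relation.TransGen.tail hu hz⟩
  · rintro ⟨z, rfl, hz⟩
    refine TG_lift some ?_ hz
    intro a b hab
    exact Relation.TransGen.single (by simp [insS, hab])

lemma TG_insS' {α : Type*} (g : α → Option α) (o : Option (Option α)) (y z : α) :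
    TG g y z ↔ TG (insS g o) (some y) (some z) := by
  rw [TG_insS]; simp

lemma cc_insS {α : Type*} [Fintype α] (g : α → Option α) (o : Option (Option α))
    (ho : o ≠ some none) : cc (insS g o) = cc g := by
  refine cc_eq _ _ some (TG_insS' g o) ?_
  intro x hx
  cases x with
  | some y => exact ⟨y, hx, hx⟩
  | none =>
    exfalso
    obtain ⟨z, -, hz⟩ := Relation.TransGen.tail'_iff.1 hx
    cases z with
    | none => exact ho hz
    | some z => simp [insS] at hz

lemma TG_insF_none {α : Type*} (g : α → Option α) (q : Option α) :
    TG (insS g (some none)) none q ↔ q = none := by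
  constructor
  · intro h
    induction h with
    | single h => simpa [insS] using h.symm
    | tail _ h ih =>
      subst ih
      simpa [insS] using h.symm
  · rintro rfl
    exact Relation.TransGen.single rfl

lemma cc_insF {α : Type*} [Fintype α] (g : α → Option α) :
    cc (insS g (some none)) = cc g + 1 := by
  rw [cc_sub g (insS g (some none)) some (TG_insS' g _)]
  rw [← Finset.card_insert_of_notMem (a := ({none} : Finset (Option α)))]
  · unfold cc
    congr 1
    ext S
    simp only [Finset.mem_image, Finset.mem_filter, Finset.mem_univ, true_and,
      exists_exists_and_eq_and, Finset.mem_insert]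
    constructor
    · rintro ⟨x, hx, rfl⟩
      cases x with
      | none =>
        left
        ext q
        simp [TG_insF_none]
      | some y =>
        right
        exact ⟨y, (TG_insS' g _ _ _).2 hx, rfl⟩
    · rintro (rfl | ⟨y, hy, rfl⟩)
      · refine ⟨none, (TG_insF_none g _).2 rfl, ?_⟩
        ext q
        simp [TG_insF_none]
      · exact ⟨some y, (TG_insS' g _ _ _).1 hy, rfl⟩
  · simp only [Finset.mem_image, Finset.mem_filter, Finset.mem_univ, true_and,
      exists_exists_and_eq_and, not_exists, not_and]
    intro y hy h
    have : some y ∈ ({none} : Finset (Option α)) := by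
      rw [← h]
      simpa using (TG_insS' g _ _ _).1 hy
    simp at this

lemma TG_insA {α : Type*} (g : α → Option α) (a : α) (y : α) (q : Option α)
    (h : TG (insA g a) (some y) q) :
    (∀ z, q = some z → TG g y z) ∧
      (q = none → Relation.ReflTransGen (fun x y => g x = some y) y a) := by
  have step : ∀ u q, Relation.ReflTransGen (fun x y => g x = some y) y u →
      insA g a (some u) = some q → (∀ z, q = some z → TG g y z) ∧
      (q = none → Relation.ReflTransGen (fun x y => g x = some y) y a) := by
    intro u q hu h
    by_cases hua : u = a
    · subst hua
      simp only [insA, sel_pos, Option.some.injEq] at h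
      subst h
      simp [hu]
    · simp only [insA, sel_neg hua, Option.map_eq_some_iff] at h
      obtain ⟨z, hz, rfl⟩ := h
      refine ⟨?_, by simp⟩
      intro z' hz'
      simp only [Option.some.injEq] at hz'
      subst hz'
      exact Relation.TransGen.tail' hu hz
  induction h with
  | single h => exact step _ _ .refl h
  | @tail p q _ h ih =>
    cases p with
    | some u => exact step u q (ih.1 u rfl).to_reflTransGen h
    | none =>
      simp only [insA, Option.map_eq_some_iff] at h
      obtain ⟨z, hz, rfl⟩ := h
      refine ⟨?_, by simp⟩
      intro z' hz'
      simp only [Option.some.injEq] at hz'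
      subst hz'
      exact Relation.TransGen.tail' (ih.2 rfl) hz

lemma cc_insA {α : Type*} [Fintype α] (g : α → Option α) (a : α) :
    cc (insA g a) = cc g := by
  refine cc_eq _ _ some ?_ ?_
  · intro y z
    constructor
    · intro h
      refine TG_lift some ?_ h
      intro u v huv
      by_cases hua : u = a
      · subst hua
        refine Relation.TransGen.head (b := none) ?_ (Relation.TransGen.single ?_)
        · simp [insA, sel_pos]
        · simp [insA, huv]
      · exact Relation.TransGen.single (by simp [insA, sel_neg hua, huv])
    · intro h
      exact (TG_insA g a y _ h).1 z rfl
  · intro x hx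
    cases x with
    | some y => exact ⟨y, hx, hx⟩
    | none =>
      obtain ⟨z, hz, hz'⟩ := Relation.TransGen.head'_iff.1 hx
      have hz2 := hz
      simp only [insA, Option.map_eq_some_iff] at hz2
      obtain ⟨v, hv, rfl⟩ := hz2
      refine ⟨v, Relation.TransGen.single hz, ?_⟩
      rcases Relation.reflTransGen_iff_eq_or_transGen.1 hz' with h | h
      · simp at h
      · exact h

/-- Insertion as a map. -/
def insP {α : Type*} : (Σ g : PP α, (Option α ⊕ Option {j // ¬ ∃ x, g.1 x = some j})) →
    (Option α → Option (Option α))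
  | ⟨g, .inl none⟩ => insS g.1 (some none)
  | ⟨g, .inl (some a)⟩ => insA g.1 a
  | ⟨g, .inr none⟩ => insS g.1 none
  | ⟨g, .inr (some j)⟩ => insS g.1 (some (some j.1))

/-- Deletion. -/
def delP {α : Type*} (h : Option α → Option (Option α)) (u : α) : Option α :=
  (h (some u)).bind fun p => p.elim ((h none).bind id) some

lemma delP_insS {α : Type*} (g : α → Option α) (o : Option (Option α)) :
    delP (insS g o) = g := by
  funext u
  cases h : g u <;> simp [delP, insS, h]

lemma delP_insA {α : Type*} (g : α → Option α) (a : α) :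
    delP (insA g a) = g := by
  funext u
  by_cases hua : u = a
  · subst hua
    cases h : g u <;> simp [delP, insA, h, sel_pos]
  · cases h : g u <;> simp [delP, insA, h, sel_neg hua]

lemma delP_insP {α : Type*} (p : Σ g : PP α, (Option α ⊕ Option {j // ¬ ∃ x, g.1 x = some j})) :
    delP (insP p) = p.1.1 := by
  rcases p with ⟨g, ((_ | a) | (_ | j))⟩ <;> simp [insP, delP_insS, delP_insA]

lemma insS_inj {α : Type*} (g : PP α) (o : Option (Option α))
    (ho : ∀ y, o = some (some y) → ¬ ∃ x, g.1 x = some y) :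
    ∀ a b y, insS g.1 o a = some y → insS g.1 o b = some y → a = b := by
  intro a b y ha hb
  cases a with
  | none =>
    cases b with
    | none => rfl
    | some b =>
      exfalso
      simp only [insS, Option.map_eq_some_iff] at ha hb
      obtain ⟨z, hz, rfl⟩ := hb
      exact ho z ha ⟨b, hz⟩
  | some a =>
    cases b with
    | none =>
      exfalso
      simp only [insS, Option.map_eq_some_iff] at ha hb
      obtain ⟨z, hz, rfl⟩ := ha
      exact ho z hb ⟨a, hz⟩
    | some b =>
      simp only [insS, Option.map_eq_some_iff] at ha hb
      obtain ⟨z, hz, rfl⟩ := ha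
      obtain ⟨z', hz', h⟩ := hb
      simp only [Option.some.injEq] at h
      subst h
      rw [g.2 _ _ _ hz hz']

lemma insA_some_iff {α : Type*} (g : α → Option α) (a u v : α) :
    insA g a (some u) = some (some v) ↔ u ≠ a ∧ g u = some v := by
  by_cases hua : u = a
  · simp [insA, sel_pos, hua]
  · simp [insA, sel_neg, hua]

lemma insA_none_iff {α : Type*} (g : α → Option α) (a u : α) :
    insA g a (some u) = some none ↔ u = a := by
  by_cases hua : u = a
  · simp [insA, sel_pos, hua]
  · simp [insA, sel_neg, hua]

lemma insA_inj {α : Type*} (g : PP α) (c : α) :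
    ∀ a b y, insA g.1 c a = some y → insA g.1 c b = some y → a = b := by
  have key : ∀ b z, insA g.1 c (some b) = some (some z) → g.1 c = some z → False := by
    intro b z hb hc
    rw [insA_some_iff] at hb
    exact hb.1 (g.2 _ _ _ hb.2 hc)
  have h0 : ∀ q, insA g.1 c none = some q ↔ ∃ z, g.1 c = some z ∧ some z = q := by
    intro q; simp [insA]
  intro a b y ha hb
  cases a with
  | none =>
    cases b with
    | none => rfl
    | some b =>
      exfalso
      obtain ⟨z, hz, rfl⟩ := (h0 _).1 ha
      exact key _ _ hb hz
  | some a =>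
    cases b with
    | none =>
      exfalso
      obtain ⟨z, hz, rfl⟩ := (h0 _).1 hb
      exact key _ _ ha hz
    | some b =>
      cases y with
      | none => rw [insA_none_iff] at ha hb; rw [ha, hb]
      | some y => rw [insA_some_iff] at ha hb; rw [g.2 _ _ _ ha.2 hb.2]

lemma insP_inj {α : Type*}
    (p : Σ g : PP α, (Option α ⊕ Option {j // ¬ ∃ x, g.1 x = some j})) :
    ∀ a b y, insP p a = some y → insP p b = some y → a = b := by
  rcases p with ⟨g, ((_ | a) | (_ | j))⟩
  · exact insS_inj g _ (by simp)
  · exact insA_inj g a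
  · exact insS_inj g _ (by simp)
  · refine insS_inj g _ ?_
    rintro y hy
    simp only [Option.some.injEq] at hy
    subst hy
    exact j.2

lemma insP_bij {α : Type*} : Function.Bijective
    (fun p : (Σ g : PP α, (Option α ⊕ Option {j // ¬ ∃ x, g.1 x = some j})) =>
      (⟨insP p, insP_inj p⟩ : PP (Option α))) := by
  constructor
  · intro p q hpq
    simp only [Subtype.mk.injEq] at hpq
    have h1 := delP_insP p
    rw [hpq, delP_insP q] at h1
    have h1 := Subtype.ext h1
    rcases p with ⟨g, c⟩
    rcases q with ⟨g', c'⟩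
    simp only at h1
    subst h1
    congr 1
    have hn := congrFun hpq none
    rcases c with ((_ | a) | (_ | j)) <;> rcases c' with ((_ | a') | (_ | j'))
    · rfl
    · simp [insP, insS, insA] at hn
    · simp [insP, insS] at hn
    · simp [insP, insS] at hn
    · simp [insP, insS, insA] at hn
    · have := congrFun hpq (some a)
      have h2 : insA g'.1 a (some a) = some none := by rw [insA_none_iff]
      simp only [insP] at this
      rw [h2, eq_comm, insA_none_iff] at this
      rw [this]
    · have := congrFun hpq (some a)
      have h2 : insA g'.1 a (some a) = some none := by rw [insA_none_iff]
      simp [insP, h2, insS] at this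
    · have := congrFun hpq (some a)
      have h2 : insA g'.1 a (some a) = some none := by rw [insA_none_iff]
      simp [insP, h2, insS] at this
    · simp [insP, insS] at hn
    · have := congrFun hpq (some a')
      have h2 : insA g'.1 a' (some a') = some none := by rw [insA_none_iff]
      simp [insP, h2, insS] at this
    · rfl
    · simp [insP, insS] at hn
    · simp [insP, insS] at hn
    · have := congrFun hpq (some a')
      have h2 : insA g'.1 a' (some a') = some none := by rw [insA_none_iff]
      simp [insP, h2, insS] at this
    · simp [insP, insS] at hn
    · simp [insP, insS] at hn
      rw [Subtype.ext hn]
  · rintro ⟨h, hh⟩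
    have hdel : ∀ a b y, delP h a = some y → delP h b = some y → a = b := by
      have aux : ∀ a y, delP h a = some y → h (some a) = some (some y) ∨
          (h (some a) = some none ∧ h none = some (some y)) := by
        intro a y hay
        simp only [delP, Option.bind_eq_some_iff] at hay
        obtain ⟨p, hp, hpy⟩ := hay
        cases p with
        | none =>
          right
          refine ⟨hp, ?_⟩
          cases hn : h none with
          | none => simp [hn] at hpy
          | some q => simp [hn] at hpy; simp [hpy]
        | some p => left; simpa [hp] using hpy
      intro a b y ha hb
      rcases aux a y ha with h1 | ⟨h1, h2⟩ <;> rcases aux b y hb with h3 | ⟨h3, h4⟩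
      · simpa using hh _ _ _ h1 h3
      · simpa using hh _ _ _ h1 h4
      · simpa using hh _ _ _ h2 h3
      · simpa using hh _ _ _ h1 h3
    have hS : (∀ u, h (some u) ≠ some none) → ∀ x, h x = insS (delP h) (h none) x := by
      intro hu x
      cases x with
      | none => rfl
      | some u =>
        cases hx : h (some u) with
        | none => simp [insS, delP, hx]
        | some p =>
          cases p with
          | none => exact absurd hx (hu u)
          | some v => simp [insS, delP, hx]
    by_cases h1 : ∃ u, h (some u) = some none
    · obtain ⟨u, hu⟩ := h1
      refine ⟨⟨⟨delP h, hdel⟩, .inl (some u)⟩, ?_⟩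
      apply Subtype.ext
      funext x
      change insA (delP h) u x = h x
      cases x with
      | none =>
        cases hn : h none with
        | none => simp [insA, delP, hu, hn]
        | some p =>
          cases p with
          | none => simpa using hh _ _ _ hu hn
          | some v => simp [insA, delP, hu, hn]
      | some v =>
        by_cases hvu : v = u
        · subst hvu; rw [hu, insA_none_iff]
        · simp only [insA, sel_neg hvu]
          cases hx : h (some v) with
          | none => simp [delP, hx]
          | some p =>
            cases p with
            | none => exact absurd (by simpa using hh _ _ _ hx hu) hvu
            | some w => simp [delP, hx]
    · push Not at h1
      have h2 := hS h1
      cases hn : h none with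
      | none =>
        refine ⟨⟨⟨delP h, hdel⟩, .inr none⟩, ?_⟩
        apply Subtype.ext
        funext x
        have h3 := h2 x; rw [hn] at h3; exact h3.symm
      | some p =>
        cases p with
        | none =>
          refine ⟨⟨⟨delP h, hdel⟩, .inl none⟩, ?_⟩
          apply Subtype.ext
          funext x
          have h3 := h2 x; rw [hn] at h3; exact h3.symm
        | some j =>
          refine ⟨⟨⟨delP h, hdel⟩, .inr (some ⟨j, ?_⟩)⟩, ?_⟩
          · rintro ⟨x, hx⟩
            have h3 := h2 (some x)
            simp only at hx
            simp only [insS, hx] at h3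
            simpa using hh _ _ _ h3 hn
          · apply Subtype.ext
            funext x
            have h3 := h2 x; rw [hn] at h3; exact h3.symm
set_option linter.unusedSectionVars false
/-! ### The recursion -/

/-- First factor of the weight at a point. -/
def fac {α R : Type*} (φ : α → R) (M : α → α → R) (g : α → Option α) (x : α) : R :=
  (g x).elim (φ x) (M x)

/-- Second factor of the weight at a point. -/
def sfac {α R : Type*} [CommRing R] (θ : α → R) (g : α → Option α) (j : α) : R :=
  sel (∃ x, g x = some j) 1 (θ j)

lemma wt_eq {α R : Type*} [Fintype α] [CommRing R] (θ φ : α → R) (M : α → α → R)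
    (g : α → Option α) : wt θ φ M g = (∏ x, fac φ M g x) * ∏ j, sfac θ g j := rfl

section
variable {R : Type*} [CommRing R] (θ φ : Option α → R) (M : Option α → Option α → R)

lemma sfac_insS (g : α → Option α) (o : Option (Option α)) (j : α)
    (h : o ≠ some (some j)) : sfac θ (insS g o) (some j) = sfac (fun x => θ (some x)) g j := by
  have : (∃ x, insS g o x = some (some j)) ↔ ∃ x, g x = some j := by
    constructor
    · rintro ⟨x, hx⟩
      cases x with
      | none => exact absurd hx h
      | some x => exact ⟨x, by simpa [insS] using hx⟩
    · rintro ⟨x, hx⟩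
      exact ⟨some x, by simpa [insS] using hx⟩
  unfold sfac
  rw [this]

lemma sfac_insA (g : α → Option α) (a : α) (j : α) :
    sfac θ (insA g a) (some j) = sfac (fun x => θ (some x)) g j := by
  have : (∃ x, insA g a x = some (some j)) ↔ ∃ x, g x = some j := by
    constructor
    · rintro ⟨x, hx⟩
      cases x with
      | none => exact ⟨a, by simpa [insA] using hx⟩
      | some x => exact ⟨x, ((insA_some_iff _ _ _ _).1 hx).2⟩
    · rintro ⟨x, hx⟩
      by_cases hxa : x = a
      · subst hxa
        exact ⟨none, by simpa [insA] using hx⟩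
      · exact ⟨some x, (insA_some_iff _ _ _ _).2 ⟨hxa, hx⟩⟩
  unfold sfac
  rw [this]

lemma fac_insS (g : α → Option α) (o : Option (Option α)) (u : α) :
    fac φ M (insS g o) (some u) = fac (fun x => φ (some x)) (fun x y => M (some x) (some y)) g u := by
  unfold fac
  cases h : g u <;> simp [insS, h]

lemma wt_insF (g : α → Option α) : wt θ φ M (insS g (some none)) =
    M none none * wt (fun x => θ (some x)) (fun x => φ (some x))
      (fun x y => M (some x) (some y)) g := by
  have h1 : sfac θ (insS g (some none)) none = 1 := sel_pos ⟨none, rfl⟩ _ _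
  rw [wt_eq, wt_eq, Fintype.prod_option, Fintype.prod_option, h1]
  simp only [fac_insS, sfac_insS θ g (some none) _ (by simp)]
  simp [fac, insS, mul_assoc]

lemma wt_insN (g : α → Option α) : wt θ φ M (insS g none) =
    θ none * φ none * wt (fun x => θ (some x)) (fun x => φ (some x))
      (fun x y => M (some x) (some y)) g := by
  have h1 : sfac θ (insS g none) none = θ none := by
    refine sel_neg ?_ _ _
    rintro ⟨x, hx⟩
    cases x <;> simp [insS] at hx
  rw [wt_eq, wt_eq, Fintype.prod_option, Fintype.prod_option, h1]
  simp only [fac_insS, sfac_insS θ g none _ (by simp)]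
  simp [fac, insS]
  ring

lemma wt_insJ (g : α → Option α) (j : α) : wt θ φ M (insS g (some (some j))) =
    (∏ x, fac (fun x => φ (some x)) (fun x y => M (some x) (some y)) g x) *
     ((∏ i ∈ Finset.univ.erase j, sfac (fun x => θ (some x)) g i) * 
      (θ none * M none (some j))) := by
  have h1 : sfac θ (insS g (some (some j))) none = θ none := by
    refine sel_neg ?_ _ _
    rintro ⟨x, hx⟩
    cases x <;> simp [insS] at hx
  have h2 : sfac θ (insS g (some (some j))) (some j) = 1 := sel_pos ⟨none, rfl⟩ _ _
  rw [wt_eq, Fintype.prod_option, Fintype.prod_option, h1,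
    ← Finset.mul_prod_erase Finset.univ
      (fun i => sfac θ (insS g (some (some j))) (some i)) (Finset.mem_univ j), h2]
  have h3 : ∏ i ∈ Finset.univ.erase j, sfac θ (insS g (some (some j))) (some i) =
      ∏ i ∈ Finset.univ.erase j, sfac (fun x => θ (some x)) g i := by
    refine Finset.prod_congr rfl ?_
    intro i hi
    refine sfac_insS θ g _ i ?_
    simp at hi ⊢
    exact fun h => hi h.symm
  rw [h3]
  simp only [fac_insS]
  simp [fac, insS]
  ring

lemma wt_insA (g : α → Option α) (a : α) : wt θ φ M (insA g a) =
    ((∏ x ∈ Finset.univ.erase a, fac (fun x => φ (some x)) (fun x y => M (some x) (some y)) g x) *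
      (M (some a) none * (g a).elim (φ none) (fun y => M none (some y)))) *
     (∏ i, sfac (fun x => θ (some x)) g i) := by
  have h0 : insA g a (some a) = some none := by rw [insA_none_iff]
  have h1 : sfac θ (insA g a) none = 1 := sel_pos ⟨some a, h0⟩ _ _
  rw [wt_eq, Fintype.prod_option, Fintype.prod_option, h1,
    ← Finset.mul_prod_erase Finset.univ _ (Finset.mem_univ a)]
  have h3 : ∏ x ∈ Finset.univ.erase a, fac φ M (insA g a) (some x) =
      ∏ x ∈ Finset.univ.erase a,
        fac (fun x => φ (some x)) (fun x y => M (some x) (some y)) g x := by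
    refine Finset.prod_congr rfl ?_
    intro i hi
    simp at hi
    unfold fac
    cases h : g i <;> simp [insA, h, sel_neg hi]
  rw [h3]
  simp only [sfac_insA]
  have h4 : fac φ M (insA g a) (some a) = M (some a) none := by simp [fac, h0]
  have h5 : fac φ M (insA g a) none = (g a).elim (φ none) (fun y => M none (some y)) := by
    cases h : g a <;> simp [fac, insA, h]
  rw [h4, h5]
  ring

lemma sum_sel (P : α → Prop) [inst : Fintype {j // ¬ P j}] (F : α → R) :
    ∑ j : {j // ¬ P j}, F j.1 = ∑ j, sel (P j) 0 (F j) := by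
  rw [Subsingleton.elim inst (Subtype.fintype _),
    ← Finset.sum_subtype (Finset.univ.filter fun j => ¬ P j) (by simp) F, Finset.sum_filter]
  refine Finset.sum_congr rfl ?_
  intro j _
  by_cases h : P j
  · simp [h, sel_pos]
  · simp [h, sel_neg]

lemma pp2_option (β : R) : pp2 β θ φ M = ∑ g : PP α, β ^ cc g.1 *
    ((β * M none none + θ none * φ none) * wt (fun x => θ (some x)) (fun x => φ (some x))
      (fun x y => M (some x) (some y)) g.1 +
     ((∑ a, (∏ x ∈ Finset.univ.erase a,
          fac (fun x => φ (some x)) (fun x y => M (some x) (some y)) g.1 x) *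
        (M (some a) none * (g.1 a).elim (φ none) (fun y => M none (some y)))) *
          (∏ i, sfac (fun x => θ (some x)) g.1 i) +
      (∏ x, fac (fun x => φ (some x)) (fun x y => M (some x) (some y)) g.1 x) *
       (∑ j, (∏ i ∈ Finset.univ.erase j, sfac (fun x => θ (some x)) g.1 i) *
        sel (∃ x, g.1 x = some j) 0 (θ none * M none (some j))))) := by
  unfold pp2
  rw [← Fintype.sum_bijective _ insP_bij
    (fun p => β ^ cc (insP p) * wt θ φ M (insP p)) _ (fun p => rfl)]
  rw [Fintype.sum_sigma]
  refine Finset.sum_congr rfl ?_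
  intro g _
  rw [Fintype.sum_sum_type, Fintype.sum_option, Fintype.sum_option]
  simp only [insP, cc_insF, cc_insA]
  rw [cc_insS _ _ (by simp)]
  have : ∀ j : α, cc (insS g.1 (some (some j))) = cc g.1 := fun j => cc_insS _ _ (by simp)
  simp only [this, wt_insF, wt_insN, wt_insJ, wt_insA]
  have h2 : ∀ j : α, (∏ i ∈ Finset.univ.erase j, sfac (fun x => θ (some x)) g.1 i) *
        sel (∃ x, g.1 x = some j) 0 (θ none * M none (some j)) =
      sel (∃ x, g.1 x = some j) 0 ((∏ i ∈ Finset.univ.erase j, sfac (fun x => θ (some x)) g.1 i) *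
        (θ none * M none (some j))) := by
    intro j
    by_cases h : ∃ x, g.1 x = some j
    · simp only [sel_pos h, mul_zero]
    · simp only [sel_neg h]
  simp only [h2]
  rw [← sum_sel (fun j => ∃ x, g.1 x = some j)]
  simp only [← Finset.mul_sum, ← Finset.sum_mul]
  ring

end

/-- Sum over all colourings. -/
def aa (α : Type*) {ι R : Type*} [Fintype α] [DecidableEq α] [Fintype ι] [CommRing R] (β : R)
    (θ φ : ι → R)     (A : Matrix ι ι R) : R :=
  ∑ f : α → ι, pp2 β (fun x => θ (f x)) (fun x => φ (f x)) (fun x y => A (f x) (f y))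

/-- The product rule expression. -/
def dwt {ι R : Type*} [CommRing R] (θ φ θ' φ' : ι → R) (A A' : Matrix ι ι R) (f : α → ι)
    (g : α → Option α) : R :=
  (∑ a, (∏ x ∈ Finset.univ.erase a, fac (fun x => φ (f x)) (fun x y => A (f x) (f y)) g x) *
        fac (fun x => φ' (f x)) (fun x y => A' (f x) (f y)) g a) *
          (∏ i, sfac (fun x => θ (f x)) g i) +
      (∏ x, fac (fun x => φ (f x)) (fun x y => A (f x) (f y)) g x) *
       (∑ j, (∏ i ∈ Finset.univ.erase j, sfac (fun x => θ (f x)) g i) *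
        sel (∃ x, g x = some j) 0 (θ' (f j)))

lemma aa_option {ι R : Type*} [Fintype ι] [CommRing R] (β : R) (θ φ : ι → R)
    (A : Matrix ι ι R) :
    aa (Option α) β θ φ A = (β * A.trace + θ ⬝ᵥ φ) * aa α β θ φ A +
      ∑ f : α → ι, ∑ g : PP α, β ^ cc g.1 *
        dwt θ φ (θ ᵥ* A) (A *ᵥ φ) A (A * A) f g.1 := by
  unfold aa
  rw [← (Equiv.piOptionEquivProd (α := α) (β := fun _ => ι)).symm.sum_comp,
    Fintype.sum_prod_type_right]
  rw [Finset.mul_sum, ← Finset.sum_add_distrib]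
  refine Finset.sum_congr rfl ?_
  intro f _
  simp only [pp2_option]
  simp only [Equiv.piOptionEquivProd_symm_apply]
  rw [Finset.sum_comm]
  unfold pp2
  rw [Finset.mul_sum, ← Finset.sum_add_distrib]
  refine Finset.sum_congr rfl ?_
  intro g _
  rw [← Finset.mul_sum]
  rw [mul_left_comm, ← mul_add]
  congr 1
  rw [Finset.sum_add_distrib]
  congr 1
  · rw [← Finset.sum_mul]
    congr 1
    rw [Finset.sum_add_distrib, ← Finset.mul_sum]
    rfl
  · unfold dwt
    rw [Finset.sum_add_distrib]
    congr 1
    · rw [← Finset.sum_mul]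
      congr 1
      rw [Finset.sum_comm]
      refine Finset.sum_congr rfl ?_
      intro a _
      rw [← Finset.mul_sum]
      congr 1
      unfold fac
      cases h : g.1 a <;> simp [Matrix.mulVec, dotProduct, Matrix.mul_apply]
    · rw [← Finset.mul_sum]
      congr 1
      rw [Finset.sum_comm]
      refine Finset.sum_congr rfl ?_
      intro j _
      rw [← Finset.mul_sum]
      congr 1
      by_cases h : ∃ x, g.1 x = some j
      · simp only [sel_pos h, Finset.sum_const_zero]
      · simp only [sel_neg h]
        simp [Matrix.vecMul, dotProduct]

lemma aa_equiv {α α' ι R : Type*} [Fintype α] [Fintype α'] [DecidableEq α]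
    [DecidableEq α'] [Fintype ι] [CommRing R]
    (e : α ≃ α') (β : R) (θ φ : ι → R) (A : Matrix ι ι R) :
    aa α β θ φ A = aa α' β θ φ A := by
  unfold aa
  refine Fintype.sum_equiv (e.arrowCongr (Equiv.refl ι)) _ _ ?_
  intro f
  rw [← pp2_equiv e]
  simp
/-! ### Analysis -/

lemma hasDerivAt_wt {ι : Type*} (θ φ : ℂ → ι → ℂ) (A : ℂ → Matrix ι ι ℂ)
    (θ' φ' : ι → ℂ) (A' : Matrix ι ι ℂ) (t : ℂ)
    (hθ : ∀ i, HasDerivAt (fun s => θ s i) (θ' i) t)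
    (hφ : ∀ i, HasDerivAt (fun s => φ s i) (φ' i) t)
    (hA : ∀ i j, HasDerivAt (fun s => A s i j) (A' i j) t) (f : α → ι) (g : α → Option α) :
    HasDerivAt (fun s => wt (fun x => θ s (f x)) (fun x => φ s (f x))
      (fun x y => A s (f x) (f y)) g) (dwt (θ t) (φ t) θ' φ' (A t) A' f g) t := by
  simp only [wt_eq]
  have h1 : ∀ x, HasDerivAt (fun s => fac (fun x => φ s (f x)) (fun x y => A s (f x) (f y)) g x)
      (fac (fun x => φ' (f x)) (fun x y => A' (f x) (f y)) g x) t := by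
    intro x
    unfold fac
    cases h : g x with
    | none => exact hφ _
    | some y => exact hA _ _
  have h2 : ∀ j, HasDerivAt (fun s => sfac (fun x => θ s (f x)) g j)
      (sel (∃ x, g x = some j) 0 (θ' (f j))) t := by
    intro j
    unfold sfac
    by_cases h : ∃ x, g x = some j
    · simp only [sel_pos h]
      exact hasDerivAt_const _ _
    · simp only [sel_neg h]
      exact hθ _
  have h3 := HasDerivAt.fun_finsetProd (u := Finset.univ) (fun x _ => h1 x)
  have h4 := HasDerivAt.fun_finsetProd (u := Finset.univ) (fun x _ => h2 x)
  exact h3.mul h4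

lemma hasDerivAt_aa {ι : Type*} [Fintype ι] (β : ℂ) (θ φ : ℂ → ι → ℂ) (A : ℂ → Matrix ι ι ℂ)
    (θ' φ' : ι → ℂ) (A' : Matrix ι ι ℂ) (t : ℂ)
    (hθ : ∀ i, HasDerivAt (fun s => θ s i) (θ' i) t)
    (hφ : ∀ i, HasDerivAt (fun s => φ s i) (φ' i) t)
    (hA : ∀ i j, HasDerivAt (fun s => A s i j) (A' i j) t) :
    HasDerivAt (fun s => aa α β (θ s) (φ s) (A s))
      (∑ f : α → ι, ∑ g : PP α, β ^ cc g.1 * dwt (θ t) (φ t) θ' φ' (A t) A' f g.1) t := by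
  unfold aa pp2
  refine HasDerivAt.fun_sum fun f _ => HasDerivAt.fun_sum fun g _ => ?_
  exact (hasDerivAt_wt θ φ A θ' φ' A' t hθ hφ hA f g.1).const_mul _

section
variable {ι : Type*} [Fintype ι] [DecidableEq ι]

/-- The resolvent. -/
def NN (A : Matrix ι ι ℂ) (t : ℂ) : Matrix ι ι ℂ := (1 - t • A)⁻¹

lemma continuous_one_sub (A : Matrix ι ι ℂ) : Continuous fun t : ℂ => 1 - t • A := by fun_prop

lemma NN_cont (A : Matrix ι ι ℂ) (t : ℂ) (h : (1 - t • A).det ≠ 0) (i j : ι) :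
    ContinuousAt (fun s => NN A s i j) t := by
  have h1 : (fun s => NN A s i j) =
      fun s => ((1 - s • A).det)⁻¹ * (1 - s • A).adjugate i j := by
    funext s
    simp [NN, Matrix.inv_def]
  rw [h1]
  have h2 : Continuous fun s : ℂ => (1 - s • A).det := (continuous_one_sub A).matrix_det
  have h3 : Continuous fun s : ℂ => (1 - s • A).adjugate i j :=
    ((continuous_one_sub A).matrix_adjugate).matrix_elem i j
  exact (h2.continuousAt.inv₀ h).mul h3.continuousAt

lemma NN_mul (A : Matrix ι ι ℂ) (t : ℂ) (h : (1 - t • A).det ≠ 0) :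
    NN A t * (1 - t • A) = 1 := Matrix.nonsing_inv_mul _ (Ne.isUnit h)

lemma mul_NN (A : Matrix ι ι ℂ) (t : ℂ) (h : (1 - t • A).det ≠ 0) :
    (1 - t • A) * NN A t = 1 := Matrix.mul_nonsing_inv _ (Ne.isUnit h)

lemma NN_comm (A : Matrix ι ι ℂ) (t : ℂ) (h : (1 - t • A).det ≠ 0) :
    NN A t * A = A * NN A t := by
  have h1 : A * (1 - t • A) = (1 - t • A) * A := by
    simp [mul_sub, sub_mul]
  calc NN A t * A = NN A t * (A * ((1 - t • A) * NN A t)) := by rw [mul_NN A t h, mul_one]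
    _ = NN A t * (A * (1 - t • A)) * NN A t := by simp only [mul_assoc]
    _ = NN A t * (1 - t • A) * A * NN A t := by rw [h1]; simp only [mul_assoc]
    _ = A * NN A t := by rw [NN_mul A t h, one_mul]

lemma NN_sub (A : Matrix ι ι ℂ) (s t : ℂ) (hs : (1 - s • A).det ≠ 0)
    (ht : (1 - t • A).det ≠ 0) :
    NN A s - NN A t = (s - t) • (NN A s * A * NN A t) := by
  calc NN A s - NN A t = NN A s * ((1 - t • A) * NN A t) - (NN A s * (1 - s • A)) * NN A t := by
        rw [mul_NN A t ht, NN_mul A s hs, mul_one, one_mul]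
    _ = (s - t) • (NN A s * A * NN A t) := by
        simp only [sub_mul, mul_sub, one_mul, mul_one, smul_mul_assoc, mul_smul_comm, mul_assoc,
          sub_smul]
        abel

lemma det_ne_ev (A : Matrix ι ι ℂ) (t : ℂ) (h : (1 - t • A).det ≠ 0) :
    ∀ᶠ s in nhds t, (1 - s • A).det ≠ 0 := by
  have h2 : Continuous fun s : ℂ => (1 - s • A).det := (continuous_one_sub A).matrix_det
  exact h2.continuousAt.eventually_ne h

lemma NN_deriv (A : Matrix ι ι ℂ) (t : ℂ) (h : (1 - t • A).det ≠ 0) (i j : ι) :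
    HasDerivAt (fun s => NN A s i j) ((NN A t * A * NN A t) i j) t := by
  rw [hasDerivAt_iff_tendsto_slope]
  have h1 : Filter.Tendsto (fun s => (NN A s * A * NN A t) i j) (nhdsWithin t {t}ᶜ)
      (nhds ((NN A t * A * NN A t) i j)) := by
    refine Filter.Tendsto.mono_left ?_ nhdsWithin_le_nhds
    simp only [Matrix.mul_apply]
    refine tendsto_finsetSum _ fun k _ => ?_
    refine Filter.Tendsto.mul_const _ ?_
    refine tendsto_finsetSum _ fun l _ => ?_
    exact Filter.Tendsto.mul_const _ (NN_cont A t h i l)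
  refine h1.congr' ?_
  have h2 : ∀ᶠ s in nhdsWithin t {t}ᶜ, s ≠ t := self_mem_nhdsWithin
  filter_upwards [h2, nhdsWithin_le_nhds (det_ne_ev A t h)] with s hst hs
  have h3 := congrFun (congrFun (NN_sub A s t hs h) i) j
  simp only [Matrix.sub_apply, Matrix.smul_apply, smul_eq_mul] at h3
  rw [slope_def_field, h3]
  field_simp [sub_ne_zero.2 hst]

lemma det_deriv (A : Matrix ι ι ℂ) (t : ℂ) (h : (1 - t • A).det ≠ 0) :
    HasDerivAt (fun s : ℂ => (1 - s • A).det)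
      (-((1 - t • A).det * (A * NN A t).trace)) t := by
  have h1 : ∀ s : ℂ, (1 - s • A).det = (1 - t • A).det * (1 + (s - t) • (-(A * NN A t))).det := by
    intro s
    rw [← Matrix.det_mul]
    congr 1
    rw [← NN_comm A t h, mul_add, mul_one, mul_smul_comm, mul_neg, ← mul_assoc, mul_NN A t h,
      one_mul, sub_smul]
    simp only [smul_neg]
    abel
  have h2 : (fun s : ℂ => (1 - s • A).det) = fun s => (1 - t • A).det *
      (1 + (-(A * NN A t)).trace * (s - t) + Polynomial.eval (s - t) (1 + (Polynomial.X : Polynomial ℂ) •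
        (-(A * NN A t)).map ⇑Polynomial.C).det.divX.divX * (s - t) ^ 2) := by
    funext s
    rw [h1 s, Matrix.det_one_add_smul]
  rw [h2]
  generalize (1 + (Polynomial.X : Polynomial ℂ) •
        (-(A * NN A t)).map ⇑Polynomial.C).det.divX.divX = p
  have hs : HasDerivAt (fun s : ℂ => s - t) 1 t := (hasDerivAt_id t).sub_const t
  have hp : HasDerivAt (fun s : ℂ => Polynomial.eval (s - t) p) 
      (Polynomial.eval (t - t) (Polynomial.derivative p) * 1) t :=
    HasDerivAt.comp (h₂ := fun x => Polynomial.eval x p) (h := fun s => s - t) t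
      (p.hasDerivAt (t - t)) hs
  have := ((((hs.const_mul (-(A * NN A t)).trace).const_add 1).add
    (hp.mul (hs.pow 2)))).const_mul (1 - t • A).det
  refine HasDerivAt.congr_deriv this ?_
  simp

/-- The right hand side as a function of a complex scaling parameter. -/
def EE (β : ℂ) (θ φ : ι → ℂ) (A : Matrix ι ι ℂ) (t : ℂ) : ℂ :=
  Complex.exp (t * (θ ⬝ᵥ (NN A t *ᵥ φ)) - β * Complex.log (1 - t • A).det)

lemma vecMul_deriv (θ : ι → ℂ) (N : ℂ → Matrix ι ι ℂ) (N' : Matrix ι ι ℂ) (t : ℂ)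
    (hN : ∀ i j, HasDerivAt (fun s => N s i j) (N' i j) t) (i : ι) :
    HasDerivAt (fun s => (θ ᵥ* N s) i) ((θ ᵥ* N') i) t := by
  simp only [Matrix.vecMul, dotProduct]
  exact HasDerivAt.fun_sum fun j _ => (hN j i).const_mul _

lemma mulVec_deriv (θ : ι → ℂ) (N : ℂ → Matrix ι ι ℂ) (N' : Matrix ι ι ℂ) (t : ℂ)
    (hN : ∀ i j, HasDerivAt (fun s => N s i j) (N' i j) t) (i : ι) :
    HasDerivAt (fun s => (N s *ᵥ θ) i) ((N' *ᵥ θ) i) t := by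
  simp only [Matrix.mulVec, dotProduct]
  exact HasDerivAt.fun_sum fun j _ => (hN i j).mul_const _

lemma mul_deriv (B : Matrix ι ι ℂ) (N : ℂ → Matrix ι ι ℂ) (N' : Matrix ι ι ℂ) (t : ℂ)
    (hN : ∀ i j, HasDerivAt (fun s => N s i j) (N' i j) t) (i j : ι) :
    HasDerivAt (fun s => (B * N s) i j) ((B * N') i j) t := by
  simp only [Matrix.mul_apply]
  exact HasDerivAt.fun_sum fun k _ => (hN k j).const_mul _

lemma EE_deriv (β : ℂ) (θ φ : ι → ℂ) (A : Matrix ι ι ℂ) (t : ℂ)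
    (h : (1 - t • A).det ∈ Complex.slitPlane) :
    HasDerivAt (EE β θ φ A)
      ((β * (A * NN A t).trace + (θ ᵥ* NN A t) ⬝ᵥ (NN A t *ᵥ φ)) * EE β θ φ A t) t := by
  have h0 := Complex.slitPlane_ne_zero h
  have h1 := (det_deriv A t h0).clog h
  have h2 : HasDerivAt (fun s => θ ⬝ᵥ (NN A s *ᵥ φ)) (θ ⬝ᵥ ((NN A t * A * NN A t) *ᵥ φ)) t := by
    simp only [dotProduct]
    exact HasDerivAt.fun_sum fun j _ =>
      (mulVec_deriv φ (NN A) _ t (NN_deriv A t h0) j).const_mul _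
  have h3 := (((hasDerivAt_id t).mul h2).sub (h1.const_mul β)).cexp
  refine HasDerivAt.congr_deriv h3 ?_
  symm
  have h4 : NN A t * NN A t = NN A t + t • (NN A t * A * NN A t) := by
    have : NN A t * (1 - t • A) * NN A t = NN A t := by rw [NN_mul A t h0, one_mul]
    calc _ = NN A t * (1 - t • A) * NN A t + t • (NN A t * A * NN A t) := by
          simp only [mul_sub, sub_mul, mul_one, mul_smul_comm, smul_mul_assoc]
          abel
      _ = _ := by rw [this]
  have h5 : (θ ᵥ* NN A t) ⬝ᵥ (NN A t *ᵥ φ) =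
      θ ⬝ᵥ (NN A t *ᵥ φ) + t * (θ ⬝ᵥ ((NN A t * A * NN A t) *ᵥ φ)) := by
    rw [← Matrix.dotProduct_mulVec, Matrix.mulVec_mulVec, h4, Matrix.add_mulVec, dotProduct_add,
      Matrix.smul_mulVec, dotProduct_smul, smul_eq_mul]
  rw [h5]
  have h6 : -((1 - t • A).det * (A * NN A t).trace) / (1 - t • A).det = -(A * NN A t).trace := by
    field_simp
  rw [h6]
  simp only [EE, id, Pi.mul_apply, Pi.sub_apply]
  ring

lemma aa_EE_deriv (m : ℕ) (β : ℂ) (θ φ : ι → ℂ) (A : Matrix ι ι ℂ) (t : ℂ)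
    (h : (1 - t • A).det ∈ Complex.slitPlane) :
    HasDerivAt (fun s => aa (Fin m) β (θ ᵥ* NN A s) (NN A s *ᵥ φ) (A * NN A s) * EE β θ φ A s)
      (aa (Fin (m+1)) β (θ ᵥ* NN A t) (NN A t *ᵥ φ) (A * NN A t) * EE β θ φ A t) t := by
  have h0 := Complex.slitPlane_ne_zero h
  have h1 := hasDerivAt_aa (α := Fin m) β (fun s => θ ᵥ* NN A s) (fun s => NN A s *ᵥ φ)
    (fun s => A * NN A s) _ _ _ t (vecMul_deriv θ (NN A) _ t (NN_deriv A t h0))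
    (mulVec_deriv φ (NN A) _ t (NN_deriv A t h0)) (mul_deriv A (NN A) _ t (NN_deriv A t h0))
  have h2 := h1.mul (EE_deriv β θ φ A t h)
  refine HasDerivAt.congr_deriv h2 ?_
  symm
  rw [aa_equiv (finSuccEquiv m), aa_option]
  have e1 : (θ ᵥ* NN A t) ᵥ* (A * NN A t) = θ ᵥ* (NN A t * A * NN A t) := by
    rw [Matrix.vecMul_vecMul, mul_assoc]
  have e2 : (A * NN A t) *ᵥ (NN A t *ᵥ φ) = (NN A t * A * NN A t) *ᵥ φ := by
    rw [Matrix.mulVec_mulVec, NN_comm A t h0]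
  have e3 : (A * NN A t) * (A * NN A t) = A * (NN A t * A * NN A t) := by
    simp only [mul_assoc]
  rw [e1, e2, e3]
  ring

lemma aa_zero (β : ℂ) (θ φ : ι → ℂ) (A : Matrix ι ι ℂ) : aa (Fin 0) β θ φ A = 1 := by
  have : ∀ g : PP (Fin 0), cc g.1 = 0 := by
    intro g; simp [cc]
  simp only [aa, pp2, wt, this]
  have hu : Fintype.card (PP (Fin 0)) = 1 := by
    rw [Fintype.card_eq_one_iff]
    refine ⟨⟨fun x => x.elim0, fun x => x.elim0⟩, fun y => ?_⟩
    apply Subtype.ext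
    funext x
    exact x.elim0
  simp [hu]

lemma iter_EE (m : ℕ) (β : ℂ) (θ φ : ι → ℂ) (A : Matrix ι ι ℂ) (r : ℝ)
    (h : ∀ t ∈ Metric.ball (0:ℂ) r, (1 - t • A).det ∈ Complex.slitPlane) :
    ∀ t ∈ Metric.ball (0:ℂ) r, iteratedDeriv m (EE β θ φ A) t =
      aa (Fin m) β (θ ᵥ* NN A t) (NN A t *ᵥ φ) (A * NN A t) * EE β θ φ A t := by
  induction m with
  | zero => intro t ht; simp [aa_zero]
  | succ m ih =>
    intro t ht
    rw [iteratedDeriv_succ]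
    have : iteratedDeriv m (EE β θ φ A) =ᶠ[nhds t] fun t =>
        aa (Fin m) β (θ ᵥ* NN A t) (NN A t *ᵥ φ) (A * NN A t) * EE β θ φ A t := by
      filter_upwards [Metric.isOpen_ball.mem_nhds ht] with s hs using ih s hs
    rw [this.deriv_eq]
    exact (aa_EE_deriv m β θ φ A t (h t ht)).deriv

lemma hasSum_aa (β : ℂ) (θ φ : ι → ℂ) (A : Matrix ι ι ℂ)
    (h : ∀ t ∈ Metric.ball (0:ℂ) 2, (1 - t • A).det ∈ Complex.slitPlane) :
    HasSum (fun m : ℕ => ((m.factorial : ℂ))⁻¹ * aa (Fin m) β θ φ A) (EE β θ φ A 1) := by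
  have h1 : DifferentiableOn ℂ (EE β θ φ A) (Metric.ball 0 2) := fun t ht =>
    (EE_deriv β θ φ A t (h t ht)).differentiableAt.differentiableWithinAt
  have h2 := Complex.hasSum_taylorSeries_on_ball h1 (z := 1) (by simp)
  have h3 : (fun m : ℕ => ((m.factorial : ℂ))⁻¹ * aa (Fin m) β θ φ A) =
      fun n => ((n.factorial : ℂ))⁻¹ • ((1:ℂ) - 0) ^ n • iteratedDeriv n (EE β θ φ A) 0 := by
    funext m
    rw [iter_EE m β θ φ A 2 h 0 (by simp)]
    simp [NN, EE]
  rw [h3]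
  exact h2

end
/-! ### Grouping colourings by multiplicities -/

lemma fiber_equiv {n m : ℕ} (r : Fin n → ℕ) (f : Fin m → Fin n)
    (h : ∀ i, Fintype.card {k // f k = i} = r i) :
    ∃ e : Fin m ≃ (Σ i : Fin n, Fin (r i)), ∀ k, (e k).1 = f k :=
  ⟨(Equiv.sigmaFiberEquiv f).symm.trans
    (Equiv.sigmaCongrRight fun i => Fintype.equivFinOfCardEq (h i)), fun k => rfl⟩

lemma card_fiber {n m : ℕ} (r : Fin n → ℕ) (hr : ∑ i, r i = m) :
    (Finset.univ.filter fun f : Fin m → Fin n =>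
      ∀ i, Fintype.card {k // f k = i} = r i).card * ∏ i, (r i).factorial = m.factorial := by
  have hc : Fintype.card (Fin m) = Fintype.card (Σ i : Fin n, Fin (r i)) := by simp [hr]
  let e0 := Fintype.equivOfCardEq hc
  set S := Finset.univ.filter fun f : Fin m → Fin n =>
      ∀ i, Fintype.card {k // f k = i} = r i with hS
  let f0 : Fin m → Fin n := fun k => (e0 k).1
  have hf0 : ∀ i, Fintype.card {k // f0 k = i} = r i := by
    intro i
    have e1 : {k // f0 k = i} ≃ {x : (Σ i : Fin n, Fin (r i)) // x.1 = i} :=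
      e0.subtypeEquiv (fun k => Iff.rfl)
    rw [Fintype.card_congr (e1.trans (Equiv.sigmaSubtype i))]
    simp
  have hmaps : ∀ σ : Equiv.Perm (Fin m), f0 ∘ σ ∈ S := by
    intro σ
    simp only [hS, Finset.mem_filter, Finset.mem_univ, true_and]
    intro i
    rw [← hf0 i]
    exact Fintype.card_congr (σ.subtypeEquiv (fun k => Iff.rfl))
  have h1 := Finset.card_eq_sum_card_fiberwise (s := (Finset.univ : Finset (Equiv.Perm (Fin m))))
    (f := fun σ : Equiv.Perm (Fin m) => f0 ∘ ⇑σ) (t := S) (fun σ _ => hmaps σ)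
  rw [Finset.card_univ, Fintype.card_perm, Fintype.card_fin] at h1
  rw [h1, ← smul_eq_mul, ← Finset.sum_const]
  refine Finset.sum_congr rfl ?_
  intro f hf
  simp only [hS, Finset.mem_filter, Finset.mem_univ, true_and] at hf
  obtain ⟨e, he⟩ := fiber_equiv r f hf
  obtain ⟨e', he'⟩ := fiber_equiv r f0 hf0
  let τ : Equiv.Perm (Fin m) := e.trans e'.symm
  have hτ : f0 ∘ τ = f := by
    funext k
    simp [τ, ← he', he]
  have h2 := DomMulAct.stabilizer_card f0
  simp only [hf0] at h2
  rw [← h2, ← Fintype.card_coe]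
  refine Fintype.card_congr ?_
  refine (Equiv.mulRight τ).subtypeEquiv ?_
  intro σ
  simp only [Finset.mem_filter, Finset.mem_univ, true_and, Equiv.coe_mulRight, Equiv.Perm.coe_mul]
  rw [← hτ, ← Function.comp_assoc]
  constructor
  · intro h; rw [h]
  · intro h; exact τ.surjective.injective_comp_right h

/-- The `r`-th term. -/
def term {n : ℕ} (β : ℝ) (θ φ : Fin n → ℝ) (A : Matrix (Fin n) (Fin n) ℝ) (r : Fin n → ℕ) : ℝ :=
  ((∏ i, (r i).factorial : ℕ) : ℝ)⁻¹ * pp2 β (fun k : (Σ i : Fin n, Fin (r i)) => θ k.1)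
    (fun k => φ k.1) (fun k l => A k.1 l.1)

lemma term_eq {n m : ℕ} (β : ℝ) (θ φ : Fin n → ℝ) (A : Matrix (Fin n) (Fin n) ℝ)
    (r : Fin n → ℕ) (hr : ∑ i, r i = m) : term β θ φ A r = ((m.factorial : ℝ))⁻¹ *
      ∑ f ∈ Finset.univ.filter (fun f : Fin m → Fin n => (fun i => Fintype.card {k // f k = i}) = r),
        pp2 β (fun x => θ (f x)) (fun x => φ (f x)) (fun x y => A (f x) (f y)) := by
  have h1 : ∀ f ∈ Finset.univ.filter
      (fun f : Fin m → Fin n => (fun i => Fintype.card {k // f k = i}) = r),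
      pp2 β (fun x => θ (f x)) (fun x => φ (f x)) (fun x y => A (f x) (f y)) =
      pp2 β (fun k : (Σ i : Fin n, Fin (r i)) => θ k.1)
        (fun k => φ k.1) (fun k l => A k.1 l.1) := by
    intro f hf
    simp only [Finset.mem_filter, Finset.mem_univ, true_and] at hf
    obtain ⟨e, he⟩ := fiber_equiv r f (fun i => congrFun hf i)
    rw [← pp2_equiv e]
    simp only [he]
  rw [Finset.sum_congr rfl h1, Finset.sum_const, nsmul_eq_mul, ← mul_assoc]
  unfold term
  congr 1
  have h2 := card_fiber r hr
  have h3 : (Finset.univ.filter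
      (fun f : Fin m → Fin n => (fun i => Fintype.card {k // f k = i}) = r)) =
      (Finset.univ.filter fun f : Fin m → Fin n =>
        ∀ i, Fintype.card {k // f k = i} = r i) := by
    ext f; simp [funext_iff]
  rw [h3, ← h2]
  have hp : ((∏ i, (r i).factorial : ℕ) : ℝ) ≠ 0 := by
    norm_cast
    exact Finset.prod_ne_zero_iff.2 fun i _ => Nat.factorial_ne_zero _
  have hm : (m.factorial : ℝ) ≠ 0 := by exact_mod_cast Nat.factorial_ne_zero m
  rw [← h2] at hm
  push_cast at hm hp ⊢
  have := left_ne_zero_of_mul hm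
  field_simp

lemma sum_term {n : ℕ} (m : ℕ) (β : ℝ) (θ φ : Fin n → ℝ) (A : Matrix (Fin n) (Fin n) ℝ) :
    ∑ r ∈ Finset.piAntidiag Finset.univ m, term β θ φ A r =
      ((m.factorial : ℝ))⁻¹ * aa (Fin m) β θ φ A := by
  unfold aa
  rw [← Finset.sum_fiberwise_of_maps_to (s := (Finset.univ : Finset (Fin m → Fin n)))
    (t := Finset.piAntidiag (Finset.univ : Finset (Fin n)) m)
    (g := fun f i => Fintype.card {k // f k = i}), Finset.mul_sum]
  · refine Finset.sum_congr rfl ?_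
    intro r hr
    simp only [Finset.mem_piAntidiag] at hr
    exact term_eq β θ φ A r hr.1
  · intro f _
    simp only [Finset.mem_piAntidiag, Finset.mem_univ, implies_true, and_true]
    rw [← Fintype.card_sigma, Fintype.card_congr (Equiv.sigmaFiberEquiv f), Fintype.card_fin]

lemma abs_pp2_le {α : Type*} [Fintype α] (β : ℝ) (θ φ : α → ℝ) (M : α → α → ℝ) :
    |pp2 β θ φ M| ≤ pp2 |β| (fun x => |θ x|) (fun x => |φ x|) (fun x y => |M x y|) := by
  unfold pp2
  refine (Finset.abs_sum_le_sum_abs _ _).trans (Finset.sum_le_sum fun g _ => le_of_eq ?_)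
  rw [abs_mul, abs_pow]
  congr 1
  rw [wt_eq, wt_eq, abs_mul, Finset.abs_prod, Finset.abs_prod]
  congr 1
  · refine Finset.prod_congr rfl fun x _ => ?_
    unfold fac
    cases g.1 x <;> rfl
  · refine Finset.prod_congr rfl fun j _ => ?_
    unfold sfac
    by_cases h : ∃ x, g.1 x = some j
    · simp only [sel_pos h, abs_one]
    · simp only [sel_neg h]

lemma abs_term_le {n : ℕ} (β : ℝ) (θ φ : Fin n → ℝ) (A : Matrix (Fin n) (Fin n) ℝ)
    (r : Fin n → ℕ) : |term β θ φ A r| ≤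
      term |β| (fun x => |θ x|) (fun x => |φ x|) (Matrix.of fun x y => |A x y|) r := by
  unfold term
  rw [abs_mul, abs_of_nonneg (a := ((∏ i, (r i).factorial : ℕ) : ℝ)⁻¹) (by positivity)]
  exact mul_le_mul_of_nonneg_left (abs_pp2_le _ _ _ _) (by positivity)

lemma hasSum_fiber {n : ℕ} (m : ℕ) (u : (Fin n → ℕ) → ℝ) :
    HasSum (fun r : {r : Fin n → ℕ // ∑ i, r i = m} => u r.1)
      (∑ r ∈ Finset.piAntidiag Finset.univ m, u r) := by
  have h : ∀ r, r ∈ Finset.piAntidiag (Finset.univ : Finset (Fin n)) m ↔ ∑ i, r i = m := by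
    intro r; simp [Finset.mem_piAntidiag]
  letI : Fintype {r : Fin n → ℕ // ∑ i, r i = m} := Fintype.subtype _ h
  rw [Finset.sum_subtype _ h]
  exact hasSum_fintype _

lemma tsum_term {n : ℕ} (β : ℝ) (θ φ : Fin n → ℝ) (A : Matrix (Fin n) (Fin n) ℝ) (E : ℝ)
    (hE : HasSum (fun m : ℕ => ((m.factorial : ℝ))⁻¹ * aa (Fin m) β θ φ A) E)
    (hS : Summable (fun m : ℕ => ((m.factorial : ℝ))⁻¹ *
      aa (Fin m) |β| (fun x => |θ x|) (fun x => |φ x|) (Matrix.of fun x y => |A x y|))) :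
    ∑' r, term β θ φ A r = E := by
  let e := Equiv.sigmaFiberEquiv (fun r : Fin n → ℕ => ∑ i, r i)
  have hv : Summable (term |β| (fun x => |θ x|) (fun x => |φ x|) (Matrix.of fun x y => |A x y|)) := by
    rw [← e.summable_iff, summable_sigma_of_nonneg]
    · constructor
      · intro m
        exact (hasSum_fiber m _).summable
      · have : ∀ m, ∑' r : {r : Fin n → ℕ // ∑ i, r i = m}, 
          term |β| (fun x => |θ x|) (fun x => |φ x|) (Matrix.of fun x y => |A x y|) r.1 =
          ((m.factorial : ℝ))⁻¹ *
      aa (Fin m) |β| (fun x => |θ x|) (fun x => |φ x|) (Matrix.of fun x y => |A x y|) := by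
          intro m
          rw [(hasSum_fiber m _).tsum_eq, sum_term]
        refine hS.congr ?_
        intro m
        exact (this m).symm
    · intro x
      exact (abs_nonneg _).trans (abs_term_le β θ φ A _)
  have hu : Summable (term β θ φ A) := Summable.of_norm_bounded hv (abs_term_le β θ φ A)
  have h1 := e.hasSum_iff.2 hu.hasSum
  have h2 := h1.sigma (fun m => hasSum_fiber m (term β θ φ A))
  simp only [sum_term] at h2
  exact h2.unique hE

/-! ### Real version -/

lemma aa_cast {n : ℕ} (m : ℕ) (β : ℝ) (θ φ : Fin n → ℝ) (A : Matrix (Fin n) (Fin n) ℝ) :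
    ((aa (Fin m) β θ φ A : ℝ) : ℂ) = aa (Fin m) (β : ℂ) (fun i => (θ i : ℂ)) (fun i => (φ i : ℂ))
      (A.map Complex.ofReal) := by
  unfold aa pp2
  simp only [wt_eq]
  push_cast
  refine Finset.sum_congr rfl fun f _ => Finset.sum_congr rfl fun g _ => ?_
  congr 2
  · refine Finset.prod_congr rfl fun x _ => ?_
    unfold fac
    cases g.1 x <;> rfl
  · refine Finset.prod_congr rfl fun j _ => ?_
    unfold sfac
    by_cases h : ∃ x, g.1 x = some j
    · simp only [sel_pos h, Complex.ofReal_one]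
    · simp only [sel_neg h]

lemma hasSum_real {n : ℕ} (β : ℝ) (θ φ : Fin n → ℝ) (A S : Matrix (Fin n) (Fin n) ℝ)
    (hS : (1 - A) * S = 1)
    (h : ∀ t ∈ Metric.ball (0:ℂ) 2, (1 - t • A.map Complex.ofReal).det ∈ Complex.slitPlane) :
    HasSum (fun m : ℕ => ((m.factorial : ℝ))⁻¹ * aa (Fin m) β θ φ A)
      (Real.exp (θ ⬝ᵥ S.mulVec φ) / Matrix.det (1 - A) ^ β) := by
  have h1 := hasSum_aa (β : ℂ) (fun i => (θ i : ℂ)) (fun i => (φ i : ℂ)) (A.map Complex.ofReal) h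
  have hmap : (1 - A.map Complex.ofReal) = (1 - A).map Complex.ofReal := by
    ext i j
    simp [Matrix.one_apply]
    split_ifs <;> simp
  have hdet : (1 - A.map Complex.ofReal).det = (((1 - A).det : ℝ) : ℂ) := by
    rw [hmap]
    exact (RingHom.map_det Complex.ofRealHom (1 - A)).symm
  have hpos : 0 < (1 - A).det := by
    have := h 1 (by simp)
    rw [one_smul, hdet] at this
    simpa using this
  have hN : NN (A.map Complex.ofReal) 1 = S.map Complex.ofReal := by
    unfold NN
    rw [one_smul]
    refine Matrix.inv_eq_right_inv ?_
    rw [hmap]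
    have : ((1 - A) * S).map Complex.ofRealHom = 1 := by rw [hS]; simp
    rw [Matrix.map_mul] at this
    exact this
  have hE : EE (β : ℂ) (fun i => (θ i : ℂ)) (fun i => (φ i : ℂ)) (A.map Complex.ofReal) 1 =
      ((Real.exp (θ ⬝ᵥ S.mulVec φ) / Matrix.det (1 - A) ^ β : ℝ) : ℂ) := by
    unfold EE
    rw [hN, one_smul, hdet, ← Complex.ofReal_log hpos.le, Real.rpow_def_of_pos hpos, ← Real.exp_sub]
    push_cast
    congr 1
    simp [dotProduct, Matrix.mulVec, mul_comm]
  rw [hE] at h1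
  rw [← Complex.hasSum_ofReal]
  have h3 : (fun m : ℕ => ((((m.factorial : ℝ))⁻¹ * aa (Fin m) β θ φ A : ℝ) : ℂ)) =
      fun m : ℕ => ((m.factorial : ℂ))⁻¹ * aa (Fin m) (β : ℂ) (fun i => (θ i : ℂ))
        (fun i => (φ i : ℂ)) (A.map Complex.ofReal) := by
    funext m
    rw [← aa_cast]
    push_cast
    rfl
  rw [h3]
  exact h1

lemma small_det (n : ℕ) : ∃ δ > (0:ℝ), ∀ B : Matrix (Fin n) (Fin n) ℂ, (∀ i j, ‖B i j‖ < δ) →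
    (1 - B).det ∈ Complex.slitPlane := by
  have hc : Continuous fun B : Fin n → Fin n → ℂ => (1 - Matrix.of B).det := by
    refine Continuous.matrix_det ?_
    refine continuous_const.sub ?_
    exact continuous_id
  have h1 : (fun B : Fin n → Fin n → ℂ => (1 - Matrix.of B).det) ⁻¹' Complex.slitPlane ∈
      nhds (0 : Fin n → Fin n → ℂ) := by
    refine hc.continuousAt.preimage_mem_nhds (Complex.isOpen_slitPlane.mem_nhds ?_)
    have : (Matrix.of (0 : Fin n → Fin n → ℂ)) = 0 := rfl
    rw [this]
    simp
  obtain ⟨δ, hδ, hb⟩ := Metric.mem_nhds_iff.1 h1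
  refine ⟨δ, hδ, fun B hB => ?_⟩
  have : (fun i j => B i j) ∈ Metric.ball (0 : Fin n → Fin n → ℂ) δ := by
    rw [mem_ball_zero_iff, pi_norm_lt_iff hδ]
    intro i
    rw [pi_norm_lt_iff hδ]
    exact hB i
  exact hb this

lemma abs_pow_apply_le (n : ℕ) (A : Matrix (Fin n) (Fin n) ℝ) (c : ℝ) (hc : 0 ≤ c)
    (h : ∀ i j, |A i j| ≤ c) (k : ℕ) : ∀ i j, |(A ^ k) i j| ≤ (n * c) ^ k := by
  induction k with
  | zero =>
    intro i j
    rw [pow_zero, pow_zero, Matrix.one_apply]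
    split_ifs <;> simp
  | succ k ih =>
    intro i j
    rw [pow_succ, Matrix.mul_apply, pow_succ]
    refine (Finset.abs_sum_le_sum_abs _ _).trans ?_
    have : ∀ l ∈ (Finset.univ : Finset (Fin n)), |(A ^ k) i l * A l j| ≤ (n * c) ^ k * c := by
      intro l _
      rw [abs_mul]
      exact mul_le_mul (ih i l) (h l j) (abs_nonneg _) (by positivity)
    refine (Finset.sum_le_sum this).trans (le_of_eq ?_)
    simp
    ring

lemma geom (n : ℕ) (A : Matrix (Fin n) (Fin n) ℝ) (h : ∀ i j, |A i j| < 1 / (n + 1)) :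
    (1 - A) * ∑' k : ℕ, A ^ k = 1 := by
  have hq : (n : ℝ) * (1 / (n + 1)) < 1 := by
    rw [mul_one_div, div_lt_one (by positivity)]
    linarith
  have hb := abs_pow_apply_le n A (1 / (n + 1)) (by positivity) (fun i j => (h i j).le)
  have hs : Summable (fun k : ℕ => A ^ k) := by
    refine Pi.summable.2 fun i => Pi.summable.2 fun j => ?_
    exact Summable.of_norm_bounded (summable_geometric_of_lt_one (by positivity) hq)
      (fun k => hb k i j)
  have h1 : ∑' k : ℕ, A ^ k = 1 + A * ∑' k : ℕ, A ^ k := by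
    conv_lhs => rw [hs.tsum_eq_zero_add]
    rw [pow_zero, ← hs.tsum_mul_left A]
    simp only [pow_succ']
  rw [sub_mul, one_mul]
  nth_rewrite 1 [h1]
  simp

lemma small_ball {n : ℕ} {δ : ℝ} (hδ : ∀ B : Matrix (Fin n) (Fin n) ℂ, (∀ i j, ‖B i j‖ < δ) →
    (1 - B).det ∈ Complex.slitPlane) (A : Matrix (Fin n) (Fin n) ℝ)
    (hA : ∀ i j, |A i j| < δ / 2) :
    ∀ t ∈ Metric.ball (0:ℂ) 2, (1 - t • A.map Complex.ofReal).det ∈ Complex.slitPlane := by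
  intro t ht
  rw [mem_ball_zero_iff] at ht
  refine hδ _ fun i j => ?_
  rw [Matrix.smul_apply, Matrix.map_apply, smul_eq_mul, norm_mul, Complex.norm_real,
    Real.norm_eq_abs]
  have h1 := hA i j
  have h2 : ‖t‖ * |A i j| ≤ 2 * |A i j| := mul_le_mul_of_nonneg_right ht.le (abs_nonneg _)
  linarith

/-- The Partial Permutation MacMahon Master Theorem:
`Σ_r (1/r!) pperm_{β,θ,φ} A(n^r,n^r) = exp(θ (I-A)⁻¹ φᵀ) / det(I-A)^β`,
with `(I-A)⁻¹ = Σ_{k≥0} A^k`, for sufficiently small `A`. -/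
theorem partial_permutation_MMT (n : ℕ) (β : ℝ) :
    ∃ ε > (0 : ℝ), ∀ (A : Matrix (Fin n) (Fin n) ℝ) (θ φ : Fin n → ℝ),
      (∀ i j, |A i j| < ε) →
      ∑' r : Fin n → ℕ, ((∏ i, (r i).factorial : ℕ) : ℝ)⁻¹ *
          ppermB β (fun k => θ k.1) (fun k => φ k.1) (repA A r)
        = Real.exp (θ ⬝ᵥ (∑' k : ℕ, A ^ k).mulVec φ) / Matrix.det (1 - A) ^ β := by
  obtain ⟨δ, hδ, hd⟩ := small_det n
  refine ⟨min (δ / 2) (1 / (n + 1)), lt_min (by positivity) (by positivity), ?_⟩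
  intro A θ φ hA
  have h1 : ∀ i j, |A i j| < δ / 2 := fun i j => (hA i j).trans_le (min_le_left _ _)
  have h2 : ∀ i j, |A i j| < 1 / (n + 1) := fun i j => (hA i j).trans_le (min_le_right _ _)
  have h1' : ∀ i j, |(Matrix.of fun x y => |A x y|) i j| < δ / 2 := by
    intro i j
    rw [Matrix.of_apply, abs_abs]
    exact h1 i j
  have h2' : ∀ i j, |(Matrix.of fun x y => |A x y|) i j| < 1 / (n + 1) := by
    intro i j
    rw [Matrix.of_apply, abs_abs]
    exact h2 i j
  have hE := hasSum_real β θ φ A _ (geom n A h2) (small_ball hd A h1)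
  have hS := (hasSum_real |β| (fun x => |θ x|) (fun x => |φ x|) _ _
    (geom n _ h2') (small_ball hd _ h1')).summable
  rw [← tsum_term β θ φ A _ hE hS]
  refine tsum_congr fun r => ?_
  rw [ppermB_eq]
  rfl
end
end
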